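/- arXiv:0807.1972 — 5 statements merged into one kernel-verified Lean document; each statement's English description precedes it below -/
import Mathlib

section
/- Fix v with 0 ≤ v < 1 and λ ∈ ℂ; set γ = (1 − v²)^{−1/2} and, for y ∈ ℝ³, ỹ = (γy₁, y₂, y₃), and define g(y) = γ·exp(−γλ(|ỹ| + v·ỹ₁))/(4π|ỹ|). Then for every y ≠ 0 the function g is smooth near y and satisfies −(Δg)(y) + λ²·g(y) − 2λv·(∂₁g)(y) + v²·(∂₁²g)(y) = 0, i.e. g solves (−Δ + (λ − v∂₁)²)g = 0 away from the origin. -/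
/-- The partial derivative in the `i`-th coordinate direction of a complex-valued
function on `ℝ³`. -/
noncomputable def pd (i : Fin 3) (f : (Fin 3 → ℝ) → ℂ) : (Fin 3 → ℝ) → ℂ :=
  fun x => fderiv ℝ f x (Pi.single i 1)

/-!
Stretching the first coordinate by the Lorentz factor `γ` turns the second-order part
`-Δ + v²∂₁²` of the operator into `-Δ`, and the factor `exp(-γλv ỹ₁)` absorbs the first-order term
`-2λv∂₁`. What is left is the equation `Δu = (γλ)²u` for the Yukawa potential
`u(x) = C exp(-γλ|x|)/|x|`, which holds because in dimension three the Laplacian of `f(|x|)/|x|`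
is `f''(|x|)/|x|`.
-/

open Filter Topology

noncomputable section

section PartialDerivatives

/-- The Laplacian of a complex-valued function on `ℝ³`. -/
def laplacian (f : (Fin 3 → ℝ) → ℂ) (x : Fin 3 → ℝ) : ℂ := ∑ i, pd i (pd i f) x

variable {i : Fin 3} {f g : (Fin 3 → ℝ) → ℂ} {x : Fin 3 → ℝ}

theorem pd_eq_of_hasFDerivAt {L : (Fin 3 → ℝ) →L[ℝ] ℂ} (h : HasFDerivAt f L x) :
    pd i f x = L (Pi.single i 1) := by
  rw [pd, h.fderiv]

theorem pd_congr (h : f =ᶠ[𝓝 x] g) : pd i f x = pd i g x := by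
  rw [pd, pd, h.fderiv_eq]

theorem pd_add (hf : DifferentiableAt ℝ f x) (hg : DifferentiableAt ℝ g x) :
    pd i (fun y => f y + g y) x = pd i f x + pd i g x := by
  simp only [pd, fderiv_fun_add hf hg, add_apply]

theorem pd_const_mul (c : ℂ) : pd i (fun y => c * f y) x = c * pd i f x := by
  have h : fderiv ℝ (fun y => c * f y) = c • fderiv ℝ f := fderiv_const_smul_field c
  rw [pd, h, Pi.smul_apply, smul_apply, smul_eq_mul, pd]

theorem pd_mul (hf : DifferentiableAt ℝ f x) (hg : DifferentiableAt ℝ g x) :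
    pd i (fun y => f y * g y) x = pd i f x * g x + f x * pd i g x := by
  simp only [pd, fderiv_fun_mul hf hg, add_apply, smul_apply, smul_eq_mul]
  ring

theorem differentiableAt_pd (hf : ContDiffAt ℝ 2 f x) : DifferentiableAt ℝ (pd i f) x :=
  ((hf.fderiv_right (m := 1) (by norm_num)).differentiableAt one_ne_zero).clm_apply
    (differentiableAt_const _)

end PartialDerivatives

section CoordinateScaling

/-- The invertible linear map multiplying the `j`-th coordinate by `s j`. Taking the factors in
`ℝˣ` lets the chain rule hold without differentiability assumptions. -/
def coordScale {ι : Type*} (s : ι → ℝˣ) : (ι → ℝ) ≃L[ℝ] (ι → ℝ) :=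
  .piCongrRight fun j => .smulLeft (s j)

@[simp]
theorem coordScale_apply {ι : Type*} (s : ι → ℝˣ) (y : ι → ℝ) (j : ι) :
    coordScale s y j = s j * y j := rfl

theorem coordScale_single {ι : Type*} [DecidableEq ι] (s : ι → ℝˣ) (i : ι) :
    coordScale s (Pi.single i 1) = (s i : ℝ) • Pi.single i 1 := by
  ext j
  rcases eq_or_ne j i with rfl | hj <;> simp [*]

variable {i : Fin 3} {f : (Fin 3 → ℝ) → ℂ} (s : Fin 3 → ℝˣ)

theorem pd_comp_coordScale :
    pd i (fun y => f (coordScale s y)) = fun y => (s i : ℂ) * pd i f (coordScale s y) := by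
  funext y
  have h : fderiv ℝ (fun y => f (coordScale s y)) y = _ := (coordScale s).comp_right_fderiv
  rw [pd, h, ContinuousLinearMap.comp_apply, ContinuousLinearEquiv.coe_coe, coordScale_single,
    map_smul, Complex.real_smul, pd]

theorem pd_pd_comp_coordScale :
    pd i (pd i fun y => f (coordScale s y)) =
      fun y => (s i : ℂ) ^ 2 * pd i (pd i f) (coordScale s y) := by
  funext y
  rw [pd_comp_coordScale, pd_const_mul, pd_comp_coordScale, ← mul_assoc, ← sq]

end CoordinateScaling

section ExponentialFactor

variable {i : Fin 3} {f : (Fin 3 → ℝ) → ℂ} {x : Fin 3 → ℝ} (L : (Fin 3 → ℝ) →L[ℝ] ℂ)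

theorem pd_cexp_mul (hf : DifferentiableAt ℝ f x) :
    pd i (fun y => Complex.exp (L y) * f y) x =
      Complex.exp (L x) * (pd i f x + L (Pi.single i 1) * f x) := by
  have hL := L.hasFDerivAt (x := x).cexp
  rw [pd_mul hL.differentiableAt hf, pd_eq_of_hasFDerivAt hL, smul_apply, smul_eq_mul]
  ring

theorem pd_pd_cexp_mul (hf : ContDiffAt ℝ 2 f x) :
    pd i (pd i fun y => Complex.exp (L y) * f y) x =
      Complex.exp (L x) * (pd i (pd i f) x + 2 * L (Pi.single i 1) * pd i f x +
        L (Pi.single i 1) ^ 2 * f x) := by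
  have h : pd i (fun y => Complex.exp (L y) * f y) =ᶠ[𝓝 x]
      fun y => Complex.exp (L y) * (pd i f y + L (Pi.single i 1) * f y) := by
    filter_upwards [hf.eventually (by simp)] with y hy
    exact pd_cexp_mul L (hy.differentiableAt two_ne_zero)
  have hf' := (hf.differentiableAt two_ne_zero).const_mul (L (Pi.single i 1))
  have hpd := differentiableAt_pd (i := i) hf
  rw [pd_congr h, pd_cexp_mul L (hpd.fun_add hf'), pd_add hpd hf', pd_const_mul]
  ring

theorem laplacian_cexp_mul (hf : ContDiffAt ℝ 2 f x) :
    laplacian (fun y => Complex.exp (L y) * f y) x =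
      Complex.exp (L x) * (laplacian f x + 2 * ∑ i, L (Pi.single i 1) * pd i f x +
        (∑ i, L (Pi.single i 1) ^ 2) * f x) := by
  simp only [laplacian, pd_pd_cexp_mul L hf, ← Finset.mul_sum, Finset.sum_add_distrib,
    Finset.sum_mul, mul_assoc]

end ExponentialFactor

section Coordinates

/-- The coordinate `x ↦ x j` as a complex-valued real-linear functional. -/
def coordCLM {ι : Type*} (j : ι) : (ι → ℝ) →L[ℝ] ℂ :=
  Complex.ofRealCLM ∘L ContinuousLinearMap.proj j

@[simp]
theorem coordCLM_apply {ι : Type*} (j : ι) (x : ι → ℝ) : coordCLM j x = x j := rfl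

theorem hasDerivAt_ofReal (r : ℝ) : HasDerivAt (fun t : ℝ => (t : ℂ)) 1 r :=
  (hasDerivAt_id r).ofReal_comp

end Coordinates

section EuclideanNorm

variable {ι : Type*} [Fintype ι] {x : ι → ℝ}

/-- The Euclidean length of `x`, as opposed to the supremum norm `‖x‖` of `ι → ℝ`. -/
def euclideanNorm (x : ι → ℝ) : ℝ := √(∑ i, x i ^ 2)

theorem euclideanNorm_sq (x : ι → ℝ) : euclideanNorm x ^ 2 = ∑ i, x i ^ 2 :=
  Real.sq_sqrt (Finset.sum_nonneg fun i _ => sq_nonneg (x i))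

theorem sum_sq_pos (hx : x ≠ 0) : 0 < ∑ i, x i ^ 2 := by
  obtain ⟨i, hi⟩ := Function.ne_iff.mp hx
  exact Finset.sum_pos' (fun j _ => sq_nonneg (x j)) ⟨i, Finset.mem_univ i, sq_pos_of_ne_zero hi⟩

theorem euclideanNorm_pos (hx : x ≠ 0) : 0 < euclideanNorm x :=
  Real.sqrt_pos.mpr (sum_sq_pos hx)

theorem ofReal_euclideanNorm_ne_zero (hx : x ≠ 0) : (euclideanNorm x : ℂ) ≠ 0 :=
  Complex.ofReal_ne_zero.mpr (euclideanNorm_pos hx).ne'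

theorem contDiffAt_euclideanNorm {n : ℕ∞} (hx : x ≠ 0) : ContDiffAt ℝ n euclideanNorm x :=
  ContDiffAt.sqrt (by fun_prop) (sum_sq_pos hx).ne'

theorem hasFDerivAt_euclideanNorm (hx : x ≠ 0) :
    HasFDerivAt euclideanNorm
      (∑ j, (x j / euclideanNorm x) • ContinuousLinearMap.proj (R := ℝ) (φ := fun _ => ℝ) j) x := by
  have h : HasFDerivAt (fun y : ι → ℝ => ∑ j, y j ^ 2) _ x :=
    HasFDerivAt.fun_sum fun j _ =>
      (hasFDerivAt_apply (𝕜 := ℝ) (F' := fun _ : ι => ℝ) j x).pow 2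
  refine (h.sqrt (sum_sq_pos hx).ne').congr_fderiv ?_
  ext y
  simp only [euclideanNorm]
  simp only [one_div, mul_inv_rev, Nat.add_one_sub_one, pow_one, nsmul_eq_mul, Nat.cast_ofNat,
    smul_apply, sum_apply, ContinuousLinearMap.proj_apply, smul_eq_mul, Finset.mul_sum]
  field_simp

end EuclideanNorm

section RadialFunctions

variable {x : Fin 3 → ℝ}

theorem pd_radial {f : ℝ → ℂ} {f' : ℂ} (i : Fin 3) (hx : x ≠ 0)
    (hf : HasDerivAt f f' (euclideanNorm x)) :
    pd i (fun y => f (euclideanNorm y)) x = x i * (f' / euclideanNorm x) := by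
  have h : HasFDerivAt (fun y => f (euclideanNorm y)) _ x :=
    hf.hasFDerivAt.comp x (hasFDerivAt_euclideanNorm hx)
  rw [pd_eq_of_hasFDerivAt h]
  simp only [ContinuousLinearMap.comp_apply, sum_apply, smul_apply, ContinuousLinearMap.proj_apply,
    Pi.single_apply, smul_eq_mul, mul_ite, mul_one, mul_zero, Finset.sum_ite_eq', Finset.mem_univ,
    ↓reduceIte, ContinuousLinearMap.toSpanSingleton_apply, Complex.real_smul, Complex.ofReal_div]
  ring

theorem pd_pd_radial {f f' : ℝ → ℂ} {f'' : ℂ} (i : Fin 3) (hx : x ≠ 0)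
    (hf : ∀ᶠ r in 𝓝 (euclideanNorm x), HasDerivAt f (f' r) r)
    (hf' : HasDerivAt f' f'' (euclideanNorm x)) :
    pd i (pd i fun y => f (euclideanNorm y)) x =
      f' (euclideanNorm x) / euclideanNorm x +
        x i ^ 2 * ((f'' - f' (euclideanNorm x) / euclideanNorm x) / euclideanNorm x ^ 2) := by
  have hr : (euclideanNorm x : ℂ) ≠ 0 := ofReal_euclideanNorm_ne_zero hx
  have hnorm := hasFDerivAt_euclideanNorm hx
  have hpd : pd i (fun y => f (euclideanNorm y)) =ᶠ[𝓝 x]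
      fun y => coordCLM i y * (f' (euclideanNorm y) / euclideanNorm y) := by
    filter_upwards [hnorm.continuousAt.eventually hf, eventually_ne_nhds hx] with y hy hy0
    exact pd_radial i hy0 hy
  have hquot := hf'.fun_div (hasDerivAt_ofReal _) hr
  have hcomp : DifferentiableAt ℝ (fun y => f' (euclideanNorm y) / (euclideanNorm y : ℂ)) x :=
    hquot.differentiableAt.comp x hnorm.differentiableAt
  rw [pd_congr hpd, pd_mul (coordCLM i).differentiableAt hcomp, pd_radial i hx hquot,
    pd_eq_of_hasFDerivAt (coordCLM i).hasFDerivAt]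
  simp only [coordCLM_apply, Pi.single_eq_same, Complex.ofReal_one, one_mul, mul_one]
  field_simp

theorem laplacian_radial {f f' : ℝ → ℂ} {f'' : ℂ} (hx : x ≠ 0)
    (hf : ∀ᶠ r in 𝓝 (euclideanNorm x), HasDerivAt f (f' r) r)
    (hf' : HasDerivAt f' f'' (euclideanNorm x)) :
    laplacian (fun y => f (euclideanNorm y)) x =
      f'' + 2 / euclideanNorm x * f' (euclideanNorm x) := by
  have hr : (euclideanNorm x : ℂ) ≠ 0 := ofReal_euclideanNorm_ne_zero hx
  have hsq : (∑ i, (x i : ℂ) ^ 2) = (euclideanNorm x : ℂ) ^ 2 := mod_cast (euclideanNorm_sq x).symm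
  simp only [laplacian, pd_pd_radial _ hx hf hf', Finset.sum_add_distrib, ← Finset.sum_mul, hsq,
    Finset.sum_const, Finset.card_univ, Fintype.card_fin, nsmul_eq_mul]
  field_simp
  push_cast
  ring

theorem laplacian_radial_div {f f' : ℝ → ℂ} {f'' : ℂ} (hx : x ≠ 0)
    (hf : ∀ᶠ r in 𝓝 (euclideanNorm x), HasDerivAt f (f' r) r)
    (hf' : HasDerivAt f' f'' (euclideanNorm x)) :
    laplacian (fun y => f (euclideanNorm y) / euclideanNorm y) x = f'' / euclideanNorm x := by
  have hr : (euclideanNorm x : ℂ) ≠ 0 := ofReal_euclideanNorm_ne_zero hx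
  have hquot : ∀ᶠ r in 𝓝 (euclideanNorm x),
      HasDerivAt (fun r : ℝ => f r / r) (f' r / r - f r / r ^ 2) r := by
    filter_upwards [hf, lt_mem_nhds (euclideanNorm_pos hx)] with r hfr hr
    have hr : (r : ℂ) ≠ 0 := mod_cast hr.ne'
    refine (hfr.fun_div (hasDerivAt_ofReal r) hr).congr_deriv ?_
    field_simp
  have hquot' := (hf'.fun_div (hasDerivAt_ofReal _) hr).fun_sub
    (hf.self_of_nhds.fun_div ((hasDerivAt_ofReal _).fun_pow 2) (pow_ne_zero 2 hr))
  rw [laplacian_radial hx hquot hquot']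
  field_simp
  ring

end RadialFunctions

section Yukawa

/-- The Yukawa potential `C exp(-μ|x|)/|x|` of strength `C` and (complex) mass `μ`. -/
def yukawa (C μ : ℂ) (x : Fin 3 → ℝ) : ℂ :=
  C * Complex.exp (-μ * euclideanNorm x) / euclideanNorm x

variable {x : Fin 3 → ℝ} (C μ : ℂ)

theorem contDiffAt_yukawa {n : ℕ∞} (hx : x ≠ 0) : ContDiffAt ℝ n (yukawa C μ) x := by
  have hr : (euclideanNorm x : ℂ) ≠ 0 := ofReal_euclideanNorm_ne_zero hx
  have hnorm : ContDiffAt ℝ n (fun y => (euclideanNorm y : ℂ)) x :=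
    Complex.ofRealCLM.contDiff.contDiffAt.comp x (contDiffAt_euclideanNorm hx)
  exact (contDiffAt_const.mul (contDiffAt_const.mul hnorm).cexp).mul (hnorm.inv hr)

theorem laplacian_yukawa (hx : x ≠ 0) : laplacian (yukawa C μ) x = μ ^ 2 * yukawa C μ x := by
  have hexp (c : ℂ) (r : ℝ) : HasDerivAt (fun r : ℝ => c * Complex.exp (-μ * r))
      (-μ * c * Complex.exp (-μ * r)) r := by
    refine ((((hasDerivAt_ofReal r).const_mul (-μ)).cexp).const_mul c).congr_deriv ?_
    ring
  have h := laplacian_radial_div hx (.of_forall (hexp C)) (hexp (-μ * C) _)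
  unfold yukawa
  rw [h]
  ring

end Yukawa

section LorentzBoost

/-- The operator `-Δ + (λ - v∂₁)²`, with the square expanded. -/
def boostedHelmholtz (v lam : ℂ) (g : (Fin 3 → ℝ) → ℂ) (y : Fin 3 → ℝ) : ℂ :=
  -(pd 0 (pd 0 g) y + pd 1 (pd 1 g) y + pd 2 (pd 2 g) y) + lam ^ 2 * g y
    - 2 * lam * v * pd 0 g y + v ^ 2 * pd 0 (pd 0 g) y

/-- The change of coordinates `y ↦ ỹ = (γy₁, y₂, y₃)`. -/
def lorentzScale (γ : ℝˣ) : (Fin 3 → ℝ) ≃L[ℝ] (Fin 3 → ℝ) := coordScale ![γ, 1, 1]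

/-- The function `y ↦ exp(-γλv ỹ₁) u(ỹ)`; passing from `u` to it replaces the operator
`-Δ + (γλ)²` by `-Δ + (λ - v∂₁)²`. -/
def lorentzBoost (γ : ℝˣ) (v lam : ℂ) (u : (Fin 3 → ℝ) → ℂ) (y : Fin 3 → ℝ) : ℂ :=
  Complex.exp (((-γ * lam * v) • coordCLM 0) (lorentzScale γ y)) * u (lorentzScale γ y)

theorem lorentzBoost_yukawa (γ : ℝˣ) (v lam C : ℂ) (y : Fin 3 → ℝ) :
    lorentzBoost γ v lam (yukawa C (γ * lam)) y =
      C * Complex.exp (-γ * lam *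
        (euclideanNorm (lorentzScale γ y) + v * lorentzScale γ y 0)) /
        euclideanNorm (lorentzScale γ y) := by
  have hexp (r t : ℂ) : Complex.exp (-γ * lam * (r + v * t)) =
      Complex.exp (-γ * lam * v * t) * Complex.exp (-(γ * lam) * r) := by
    rw [← Complex.exp_add]
    ring_nf
  rw [hexp, lorentzBoost, yukawa, smul_apply, coordCLM_apply, smul_eq_mul]
  ring

variable {γ : ℝˣ} {v lam : ℂ} {u : (Fin 3 → ℝ) → ℂ} {y : Fin 3 → ℝ}

theorem contDiffAt_lorentzBoost {n : ℕ∞} (hu : ContDiffAt ℝ n u (lorentzScale γ y)) :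
    ContDiffAt ℝ n (lorentzBoost γ v lam u) y :=
  (ContinuousLinearMap.contDiff _).cexp.contDiffAt.mul hu |>.comp y
    (lorentzScale γ).contDiff.contDiffAt

theorem boostedHelmholtz_comp_lorentzScale (hγ : (γ : ℂ) ^ 2 * (1 - v ^ 2) = 1) :
    boostedHelmholtz v lam (fun y => u (lorentzScale γ y)) y =
      -laplacian u (lorentzScale γ y) + lam ^ 2 * u (lorentzScale γ y)
        - 2 * γ * lam * v * pd 0 u (lorentzScale γ y) := by
  simp only [boostedHelmholtz, lorentzScale, pd_pd_comp_coordScale]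
  simp only [pd_comp_coordScale, laplacian, Fin.sum_univ_three, Matrix.cons_val, Units.val_one,
    Complex.ofReal_one]
  linear_combination -pd 0 (pd 0 u) (coordScale ![γ, 1, 1] y) * hγ

theorem boostedHelmholtz_lorentzBoost (hγ : (γ : ℂ) ^ 2 * (1 - v ^ 2) = 1)
    (hu : ContDiffAt ℝ 2 u (lorentzScale γ y)) :
    boostedHelmholtz v lam (lorentzBoost γ v lam u) y =
      Complex.exp (((-γ * lam * v) • coordCLM 0) (lorentzScale γ y)) *
        (-laplacian u (lorentzScale γ y) + (γ * lam) ^ 2 * u (lorentzScale γ y)) := by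
  set L : (Fin 3 → ℝ) →L[ℝ] ℂ := (-γ * lam * v) • coordCLM 0 with hL
  set z := lorentzScale γ y
  have hL0 : L (Pi.single 0 1) = -γ * lam * v := by simp [hL]
  have hL1 : L (Pi.single 1 1) = 0 := by simp [hL]
  have hL2 : L (Pi.single 2 1) = 0 := by simp [hL]
  have hscale : boostedHelmholtz v lam (lorentzBoost γ v lam u) y = _ :=
    boostedHelmholtz_comp_lorentzScale (u := fun x => Complex.exp (L x) * u x) hγ
  rw [hscale, laplacian_cexp_mul L hu, pd_cexp_mul L (hu.differentiableAt two_ne_zero)]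
  simp only [Fin.sum_univ_three, hL0, hL1, hL2]
  linear_combination -Complex.exp (L z) * lam ^ 2 * u z * hγ

end LorentzBoost

theorem fundamental_solution_solves_equation_general {γ : ℝ} {v : ℂ}
    (hγ : (γ : ℂ) ^ 2 * (1 - v ^ 2) = 1) (lam : ℂ) (g : (Fin 3 → ℝ) → ℂ)
    (hg : ∀ y : Fin 3 → ℝ,
      g y = (γ : ℂ) * Complex.exp (-(γ : ℂ) * lam *
          (((√((γ * y 0) ^ 2 + (y 1) ^ 2 + (y 2) ^ 2) : ℝ) : ℂ) + v * ((γ * y 0 : ℝ) : ℂ))) /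
        ((4 * Real.pi * √((γ * y 0) ^ 2 + (y 1) ^ 2 + (y 2) ^ 2) : ℝ) : ℂ)) :
    ∀ y : Fin 3 → ℝ, y ≠ 0 →
      ContDiffAt ℝ (⊤ : ℕ∞) g y ∧
      -(pd 0 (pd 0 g) y + pd 1 (pd 1 g) y + pd 2 (pd 2 g) y) + lam ^ 2 * g y
        - 2 * lam * v * pd 0 g y + v ^ 2 * pd 0 (pd 0 g) y = 0 := by
  intro y hy
  lift γ to ℝˣ using isUnit_iff_ne_zero.mpr (by rintro rfl; simp at hγ)
  have hgu : g = lorentzBoost γ v lam (yukawa (γ / (4 * Real.pi)) (γ * lam)) := by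
    funext z
    have hnorm : euclideanNorm (lorentzScale γ z) = √((γ * z 0) ^ 2 + z 1 ^ 2 + z 2 ^ 2) := by
      simp [euclideanNorm, lorentzScale, Fin.sum_univ_three]
    rw [hg, lorentzBoost_yukawa, hnorm, lorentzScale, coordScale_apply, Matrix.cons_val_zero]
    push_cast
    ring
  have hy' : lorentzScale γ y ≠ 0 := by simpa using hy
  have hsmooth {n : ℕ∞} := contDiffAt_yukawa (n := n) (γ / (4 * Real.pi)) (γ * lam) hy'
  subst hgu
  refine ⟨contDiffAt_lorentzBoost hsmooth, ?_⟩
  refine (boostedHelmholtz_lorentzBoost hγ (hsmooth (n := 2))).trans ?_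
  rw [laplacian_yukawa _ _ hy', neg_add_cancel, mul_zero]

end

theorem sq_one_div_sqrt_one_sub_sq_mul {v : ℝ} (hv : |v| < 1) :
    ((1 / √(1 - v ^ 2) : ℝ) : ℂ) ^ 2 * (1 - (v : ℂ) ^ 2) = 1 := by
  have h : 0 < 1 - v ^ 2 := sub_pos.mpr ((sq_lt_one_iff_abs_lt_one v).mpr hv)
  have : (1 / √(1 - v ^ 2)) ^ 2 * (1 - v ^ 2) = 1 := by
    rw [div_pow, Real.sq_sqrt h.le, one_pow, one_div_mul_cancel h.ne']
  exact_mod_cast this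

/-- For `0 ≤ v < 1`, `γ = (1-v²)^{-1/2}`, `ỹ = (γy₁, y₂, y₃)`, the function
`g(y) = γ · exp(-γλ(|ỹ| + v·ỹ₁)) / (4π|ỹ|)` is smooth away from the origin and
satisfies `(-Δ + (λ - v∂₁)²) g = 0` there. -/
theorem fundamental_solution_solves_equation (v : ℝ) (hv0 : 0 ≤ v) (hv1 : v < 1)
    (lam : ℂ) (g : (Fin 3 → ℝ) → ℂ)
    (hg : ∀ y : Fin 3 → ℝ,
      g y = ((1 / Real.sqrt (1 - v ^ 2) : ℝ) : ℂ) *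
        Complex.exp (-((1 / Real.sqrt (1 - v ^ 2) : ℝ) : ℂ) * lam *
          (((Real.sqrt (((1 / Real.sqrt (1 - v ^ 2)) * y 0) ^ 2 + (y 1) ^ 2 + (y 2) ^ 2) : ℝ) : ℂ)
            + ((v : ℝ) : ℂ) * (((1 / Real.sqrt (1 - v ^ 2)) * y 0 : ℝ) : ℂ))) /
        ((4 * Real.pi *
          Real.sqrt (((1 / Real.sqrt (1 - v ^ 2)) * y 0) ^ 2 + (y 1) ^ 2 + (y 2) ^ 2) : ℝ) : ℂ)) :
    ∀ y : Fin 3 → ℝ, y ≠ 0 →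
      ContDiffAt ℝ (⊤ : ℕ∞) g y ∧
      -(pd 0 (pd 0 g) y + pd 1 (pd 1 g) y + pd 2 (pd 2 g) y) + lam ^ 2 * g y
        - 2 * lam * ((v : ℝ) : ℂ) * pd 0 g y + ((v : ℝ) : ℂ) ^ 2 * pd 0 (pd 0 g) y = 0 :=
  fundamental_solution_solves_equation_general
    (sq_one_div_sqrt_one_sub_sq_mul (abs_lt.mpr ⟨by linarith, hv1⟩)) lam g hg
end

section
/- Fix v with 0 ≤ v < 1 and λ ∈ ℂ with Re λ > 0; set γ = (1 − v²)^{−1/2} and, for y ∈ ℝ³, ỹ = (γy₁, y₂, y₃), and define g(y) = γ·exp(−γλ(|ỹ| + v·ỹ₁))/(4π|ỹ|). Then g is Lebesgue integrable on ℝ³ and for every k ∈ ℝ³ one has ∫_{ℝ³} g(y)·exp(i⟨k, y⟩) dy = 1/(|k|² + (λ + i·k₁·v)²). -/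
open MeasureTheory

/-!
The kernel `g` is the Liénard–Wiechert form of the Yukawa kernel: substituting `y = x - |x| w`,
where `x` is the retarded displacement and `w = (v, 0, 0)`, turns `|ỹ|` into `γ (|x| - ⟪w, x⟫)`
and `γ (|ỹ| + v ỹ₁)` into `|x|`. The Jacobian `1 - ⟪w, x⟫ / |x|` then cancels exactly, so `g(y) dy`
becomes `exp(-λ|x|) / (4π|x|) dx`. Since `⟪k, y⟫ = ⟪k, x⟫ - |x| ⟪k, w⟫`, the phase only shifts the
mass from `λ` to `λ + i ⟪k, w⟫`, and the Fourier transform of the Yukawa kernel of mass `m` is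
`1 / (|k|² + m²)`. The latter follows by rotating `k` to a coordinate axis and integrating over the
orthogonal planes.
-/

open Set Module
open Complex (I)
open scoped Real InnerProductSpace

theorem integral_cexp_neg_mul_abs_add_mul {m c : ℂ} (hmc : |c.re| < m.re) :
    ∫ x : ℝ, Complex.exp (-m * |x| + c * x) = 2 * m / (m ^ 2 - c ^ 2) := by
  have hpos : 0 < (m + c).re := by simpa using by linarith [neg_abs_le c.re]
  have hneg : (-m + c).re < 0 := by simpa using by linarith [le_abs_self c.re]
  have hpos₀ : m + c ≠ 0 := fun h => by simp [h] at hpos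
  have hneg₀ : -m + c ≠ 0 := fun h => by simp [h] at hneg
  have hIic : EqOn (fun x : ℝ => Complex.exp ((m + c) * x))
      (fun x => Complex.exp (-m * |x| + c * x)) (Iic 0) :=
    fun x (hx : x ≤ 0) => by simp only [abs_of_nonpos hx]; push_cast; ring_nf
  have hIoi : EqOn (fun x : ℝ => Complex.exp ((-m + c) * x))
      (fun x => Complex.exp (-m * |x| + c * x)) (Ioi 0) :=
    fun x (hx : 0 < x) => by simp only [abs_of_pos hx]; ring_nf
  rw [← intervalIntegral.integral_Iic_add_Ioi
    ((integrableOn_exp_mul_complex_Iic hpos 0).congr_fun hIic measurableSet_Iic)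
    ((integrableOn_exp_mul_complex_Ioi hneg 0).congr_fun hIoi measurableSet_Ioi),
    ← setIntegral_congr_fun measurableSet_Iic hIic, ← setIntegral_congr_fun measurableSet_Ioi hIoi,
    integral_exp_mul_complex_Iic hpos, integral_exp_mul_complex_Ioi hneg,
    show m ^ 2 - c ^ 2 = -((m + c) * (-m + c)) by ring]
  simp only [Complex.ofReal_zero, mul_zero, Complex.exp_zero]
  field_simp
  ring

theorem exists_linearIsometryEquiv_apply_eq {E F : Type*} [NormedAddCommGroup E]
    [InnerProductSpace ℝ E] [FiniteDimensional ℝ E] [NormedAddCommGroup F] [InnerProductSpace ℝ F]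
    [FiniteDimensional ℝ F] (hEF : finrank ℝ E = finrank ℝ F) {x : E} {y : F} (hxy : ‖x‖ = ‖y‖) :
    ∃ e : E ≃ₗᵢ[ℝ] F, e x = y := by
  let e := (stdOrthonormalBasis ℝ E).equiv (stdOrthonormalBasis ℝ F) (finCongr hEF)
  have hex : ‖e x‖ = ‖y‖ := by rw [e.norm_map, hxy]
  exact ⟨e.trans (Submodule.span ℝ {e x - y})ᗮ.reflection, Submodule.reflection_sub hex⟩

section IntegralsOfSqrt

variable {F : Type*} [NormedAddCommGroup F] [NormedSpace ℝ F]

theorem integral_Ioi_div_sqrt_smul_comp_sqrt (x : ℝ) (f : ℝ → F) :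
    ∫ r in Ioi 0, (r / √(x ^ 2 + r ^ 2)) • f √(x ^ 2 + r ^ 2) = ∫ R in Ioi |x|, f R := by
  have hderiv : ∀ r ∈ Ioi (0 : ℝ), HasDerivWithinAt (fun r => √(x ^ 2 + r ^ 2))
      (r / √(x ^ 2 + r ^ 2)) (Ioi 0) r := by
    intro r (hr : 0 < r)
    have := ((hasDerivAt_pow 2 r).const_add (x ^ 2)).sqrt (by positivity)
    exact (this.congr_deriv (by field_simp; norm_num)).hasDerivWithinAt
  have hmono : MonotoneOn (fun r => √(x ^ 2 + r ^ 2)) (Ioi 0) := by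
    intro r (hr : 0 < r) s _ hrs
    exact Real.sqrt_le_sqrt (by gcongr)
  have himage : (fun r => √(x ^ 2 + r ^ 2)) '' Ioi 0 = Ioi |x| := by
    ext R
    constructor
    · rintro ⟨r, hr, rfl⟩
      exact Real.lt_sqrt_of_sq_lt (by rw [sq_abs]; linarith [pow_pos (mem_Ioi.1 hr) 2])
    · intro (hR : |x| < R)
      have hsq : x ^ 2 < R ^ 2 := sq_lt_sq.2 (hR.trans_le (le_abs_self R))
      refine ⟨√(R ^ 2 - x ^ 2), Real.sqrt_pos.2 (sub_pos.2 hsq), ?_⟩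
      simp only [Real.sq_sqrt (sub_pos.2 hsq).le, add_sub_cancel,
        Real.sqrt_sq ((abs_nonneg x).trans hR.le)]
  rw [← himage, integral_image_eq_integral_deriv_smul_of_monotoneOn measurableSet_Ioi hderiv hmono]

theorem integral_inv_sqrt_smul_comp_sqrt {P : Type*} [NormedAddCommGroup P]
    [InnerProductSpace ℝ P] [FiniteDimensional ℝ P] [MeasurableSpace P] [BorelSpace P]
    (hP : finrank ℝ P = 2) (x : ℝ) (f : ℝ → F) :
    ∫ p : P, (√(x ^ 2 + ‖p‖ ^ 2))⁻¹ • f √(x ^ 2 + ‖p‖ ^ 2) = (2 * π) • ∫ R in Ioi |x|, f R := by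
  have : Nontrivial P := nontrivial_of_finrank_eq_succ hP
  have hball : (volume : Measure P).real (Metric.ball 0 1) = π := by
    simp [Measure.real, InnerProductSpace.volume_ball_of_dim_even (k := 1) hP, Real.pi_nonneg]
  rw [← integral_Ioi_div_sqrt_smul_comp_sqrt, integral_fun_norm_addHaar (volume : Measure P)
    fun r => (√(x ^ 2 + r ^ 2))⁻¹ • f √(x ^ 2 + r ^ 2), hball, hP]
  simp only [Nat.add_one_sub_one, pow_one, smul_smul, div_eq_mul_inv, ← Nat.cast_smul_eq_nsmul ℝ,
    Nat.cast_ofNat]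

end IntegralsOfSqrt

section Yukawa

variable {E : Type*} [NormedAddCommGroup E]

/-- The Yukawa kernel with mass `m`: in dimension three, the fundamental solution of `-Δ + m²`
decaying at infinity. Division by zero makes it `0` at the origin. -/
noncomputable def yukawaKernel (m : ℂ) (x : E) : ℂ :=
  Complex.exp (-m * ‖x‖) / (4 * π * ‖x‖)

theorem norm_yukawaKernel (m : ℂ) (x : E) :
    ‖yukawaKernel m x‖ = Real.exp (-m.re * ‖x‖) / (4 * π * ‖x‖) := by
  simp [yukawaKernel, Complex.norm_exp, abs_of_nonneg Real.pi_nonneg]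

theorem measurable_yukawaKernel [MeasurableSpace E] [OpensMeasurableSpace E] (m : ℂ) :
    Measurable (yukawaKernel m : E → ℂ) := by
  unfold yukawaKernel
  fun_prop

variable [InnerProductSpace ℝ E] [FiniteDimensional ℝ E] [MeasurableSpace E] [BorelSpace E]

theorem integrable_yukawaKernel (hE : finrank ℝ E = 3) {m : ℂ} (hm : 0 < m.re) :
    Integrable (yukawaKernel m : E → ℂ) := by
  have : Nontrivial E := nontrivial_of_finrank_eq_succ hE
  rw [← integrable_norm_iff (measurable_yukawaKernel m).aestronglyMeasurable]
  simp only [norm_yukawaKernel]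
  rw [integrable_fun_norm_addHaar volume (f := fun r => Real.exp (-m.re * r) / (4 * π * r)), hE]
  have hgamma : IntegrableOn (fun r : ℝ => r * Real.exp (-m.re * r)) (Ioi 0) := by
    simpa only [Real.rpow_one] using
      integrableOn_rpow_mul_exp_neg_mul_rpow (s := 1) (p := 1) (by norm_num) one_pos hm
  refine IntegrableOn.congr_fun (hgamma.div_const (4 * π)) (fun r hr => ?_) measurableSet_Ioi
  have hr₀ : r ≠ 0 := (mem_Ioi.1 hr).ne'
  simp only [Nat.add_one_sub_one, smul_eq_mul]
  field_simp

variable {P : Type*} [NormedAddCommGroup P]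

theorem yukawaKernel_toLp_prod (m : ℂ) (x : ℝ) (p : P) :
    yukawaKernel m (WithLp.toLp 2 (x, p)) = (√(x ^ 2 + ‖p‖ ^ 2))⁻¹ •
      (Complex.exp (-m * √(x ^ 2 + ‖p‖ ^ 2)) / (4 * π)) := by
  have hnorm : ‖WithLp.toLp 2 (x, p)‖ = √(x ^ 2 + ‖p‖ ^ 2) := by
    simp [WithLp.prod_norm_eq_of_L2]
  rw [yukawaKernel, hnorm, Complex.real_smul, Complex.ofReal_inv, ← div_div, inv_mul_eq_div]

variable [InnerProductSpace ℝ P] [FiniteDimensional ℝ P] [MeasurableSpace P] [BorelSpace P]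

theorem integral_yukawaKernel_toLp_prod_right (hP : finrank ℝ P = 2) {m : ℂ} (hm : 0 < m.re)
    (x : ℝ) :
    ∫ p : P, yukawaKernel m (WithLp.toLp 2 (x, p)) = Complex.exp (-m * |x|) / (2 * m) := by
  simp only [yukawaKernel_toLp_prod]
  rw [integral_inv_sqrt_smul_comp_sqrt hP x fun R => Complex.exp (-m * R) / (4 * π),
    integral_div, integral_exp_mul_complex_Ioi (by simpa using hm), Complex.real_smul]
  push_cast
  field_simp
  norm_num

theorem integral_yukawaKernel_mul_cexp_axis (hP : finrank ℝ P = 2) {m : ℂ} (hm : 0 < m.re)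
    (κ : ℝ) :
    ∫ x : WithLp 2 (ℝ × P), yukawaKernel m x * Complex.exp (I * (κ * x.fst : ℝ)) =
      1 / (κ ^ 2 + m ^ 2) := by
  have hm₀ : m ≠ 0 := by rintro rfl; simp at hm
  have hfin : finrank ℝ (WithLp 2 (ℝ × P)) = 3 := by
    rw [(WithLp.linearEquiv 2 ℝ (ℝ × P)).finrank_eq, finrank_prod, finrank_self, hP]
  have hint : Integrable fun x : WithLp 2 (ℝ × P) =>
      yukawaKernel m x * Complex.exp (I * (κ * x.fst : ℝ)) :=
    (integrable_yukawaKernel hfin hm).mul_bdd (c := 1) (by fun_prop)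
      (.of_forall fun x => (Complex.norm_exp_I_mul_ofReal _).le)
  have htoLp := (WithLp.volume_preserving_symm_measurableEquiv_toLp_prod ℝ P).symm
  rw [← htoLp.integral_comp (MeasurableEquiv.measurableEmbedding _), Measure.volume_eq_prod,
    integral_prod]
  · calc
      _ = ∫ x : ℝ, Complex.exp (-m * |x|) / (2 * m) * Complex.exp (I * (κ * x : ℝ)) := by
        simp [integral_mul_const, integral_yukawaKernel_toLp_prod_right hP hm]
      _ = (2 * m)⁻¹ * ∫ x : ℝ, Complex.exp (-m * |x| + I * κ * x) := by
        rw [← integral_const_mul]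
        congr with x
        rw [Complex.exp_add]; push_cast; ring_nf
      _ = _ := by
        rw [integral_cexp_neg_mul_abs_add_mul (by simpa using hm), mul_pow, Complex.I_sq]
        field_simp
        ring
  · exact htoLp.integrable_comp_emb (MeasurableEquiv.measurableEmbedding _) |>.2 hint

theorem integral_yukawaKernel_mul_cexp_inner (hE : finrank ℝ E = 3) {m : ℂ} (hm : 0 < m.re)
    (k : E) :
    ∫ x : E, yukawaKernel m x * Complex.exp (I * ⟪k, x⟫_ℝ) = 1 / (‖k‖ ^ 2 + m ^ 2) := by
  have hfin : finrank ℝ (WithLp 2 (ℝ × ℂ)) = finrank ℝ E := by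
    rw [(WithLp.linearEquiv 2 ℝ (ℝ × ℂ)).finrank_eq, finrank_prod, finrank_self,
      Complex.finrank_real_complex, hE]
  obtain ⟨e, he⟩ : ∃ e : WithLp 2 (ℝ × ℂ) ≃ₗᵢ[ℝ] E, e (WithLp.toLp 2 (‖k‖, 0)) = k :=
    exists_linearIsometryEquiv_apply_eq hfin (by simp)
  rw [← e.measurePreserving.integral_comp e.toHomeomorph.measurableEmbedding,
    ← integral_yukawaKernel_mul_cexp_axis Complex.finrank_real_complex hm ‖k‖]
  have hinner (x) : ⟪k, e x⟫_ℝ = ‖k‖ * x.fst := by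
    nth_rw 1 [← he]
    rw [e.inner_map_map]
    simp [WithLp.prod_inner_apply, mul_comm]
  simp only [hinner, yukawaKernel, e.norm_map]

end Yukawa

section Retardation

variable {E : Type*} [NormedAddCommGroup E] [InnerProductSpace ℝ E] {w : E}

/-- The passage from retarded to present displacement: if a source of velocity `w` emits a signal of
speed `1` when the observer is displaced by `x` from it, then `retardationMap w x` is the observer's
displacement from the source when the signal arrives. -/
def retardationMap (w x : E) : E := x - ‖x‖ • w

theorem retardationMap_zero (w : E) : retardationMap w 0 = 0 := by simp [retardationMap]

theorem bijective_retardationMap [CompleteSpace E] (hw : ‖w‖ < 1) :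
    Function.Bijective (retardationMap w) := by
  have happrox : ApproximatesLinearOn (retardationMap w)
      (ContinuousLinearEquiv.refl ℝ E : E →L[ℝ] E) univ ‖w‖₊ := fun x _ y _ => by
    have : retardationMap w x - retardationMap w y - (x - y) = (‖y‖ - ‖x‖) • w := by
      rw [retardationMap, retardationMap, sub_smul]; abel
    calc ‖retardationMap w x - retardationMap w y - (x - y)‖
      _ = |‖y‖ - ‖x‖| * ‖w‖ := by rw [this, norm_smul, Real.norm_eq_abs]
      _ ≤ ‖w‖ * ‖x - y‖ := by
        rw [mul_comm, norm_sub_rev x y]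
        gcongr
        exact abs_norm_sub_norm_le y x
  have hw' : Subsingleton E ∨
      ‖w‖₊ < ‖((ContinuousLinearEquiv.refl ℝ E).symm : E →L[ℝ] E)‖₊⁻¹ := by
    cases subsingleton_or_nontrivial E
    · exact .inl ‹_›
    · right; simpa [← NNReal.coe_lt_coe] using hw
  exact ⟨injOn_univ.1 (happrox.injOn hw'), happrox.surjective hw'⟩

theorem hasFDerivAt_retardationMap (w : E) {x : E} (hx : x ≠ 0) :
    HasFDerivAt (retardationMap w)
      (ContinuousLinearMap.id ℝ E - (‖x‖⁻¹ • innerSL ℝ x).smulRight w) x := by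
  have hnorm : HasFDerivAt (fun x : E => ‖x‖) (‖x‖⁻¹ • innerSL ℝ x) x := by
    have := (hasStrictFDerivAt_norm_sq x).hasFDerivAt.sqrt (by positivity)
    simp only [Real.sqrt_sq (norm_nonneg _)] at this
    refine this.congr_fderiv ?_
    rw [← Nat.cast_smul_eq_nsmul ℝ, smul_smul]
    congr 1
    push_cast
    field_simp
  exact (hasFDerivAt_id x).sub (hnorm.smul_const w)

theorem det_id_sub_smulRight [FiniteDimensional ℝ E] (φ : E →L[ℝ] ℝ) (w : E) :
    (ContinuousLinearMap.id ℝ E - φ.smulRight w).det = 1 - φ w := by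
  rw [sub_eq_add_neg 1, ← neg_apply, ← ContinuousLinearMap.coe_coe (-φ),
    ← LinearMap.transvection.det]
  exact congrArg LinearMap.det (LinearMap.ext fun x => by
    simp [LinearMap.transvection, sub_eq_add_neg])

/-- The Jacobian determinant of `retardationMap w` at `x ≠ 0`; division by zero makes it `1` at the
origin. -/
noncomputable def retardationJacobian (w x : E) : ℝ := 1 - ⟪w, x⟫_ℝ / ‖x‖

theorem retardationJacobian_pos (hw : ‖w‖ < 1) (x : E) : 0 < retardationJacobian w x := by
  have : ⟪w, x⟫_ℝ / ‖x‖ ≤ ‖w‖ :=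
    div_le_of_le_mul₀ (norm_nonneg x) (norm_nonneg w) (real_inner_le_norm w x)
  exact sub_pos.2 (this.trans_lt hw)

section ChangeOfVariables

variable [FiniteDimensional ℝ E]

theorem abs_det_fderiv_retardationMap (hw : ‖w‖ < 1) (x : E) :
    |(ContinuousLinearMap.id ℝ E - (‖x‖⁻¹ • innerSL ℝ x).smulRight w).det| =
      retardationJacobian w x := by
  have : (ContinuousLinearMap.id ℝ E - (‖x‖⁻¹ • innerSL ℝ x).smulRight w).det =
      retardationJacobian w x := by
    rw [det_id_sub_smulRight, retardationJacobian, smul_apply, innerSL_apply_apply,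
      real_inner_comm, smul_eq_mul, inv_mul_eq_div]
  rw [this, abs_of_pos (retardationJacobian_pos hw x)]

theorem image_compl_zero_retardationMap (hw : ‖w‖ < 1) :
    retardationMap w '' {0}ᶜ = {0}ᶜ := by
  rw [image_compl_eq (bijective_retardationMap hw), image_singleton, retardationMap_zero]

variable {F : Type*} [NormedAddCommGroup F] [NormedSpace ℝ F]
variable [Nontrivial E] [MeasurableSpace E] [BorelSpace E]

theorem integral_retardationJacobian_smul_comp (hw : ‖w‖ < 1) (f : E → F) :
    ∫ x, retardationJacobian w x • f (retardationMap w x) = ∫ y, f y := by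
  have := integral_image_eq_integral_abs_det_fderiv_smul volume (measurableSet_singleton 0).compl
    (fun x hx => (hasFDerivAt_retardationMap w hx).hasFDerivWithinAt)
    (bijective_retardationMap hw).injective.injOn f
  simpa only [image_compl_zero_retardationMap hw, restrict_compl_singleton,
    abs_det_fderiv_retardationMap hw] using this.symm

theorem integrable_retardationJacobian_smul_comp_iff (hw : ‖w‖ < 1) {f : E → F} :
    Integrable (fun x => retardationJacobian w x • f (retardationMap w x)) ↔ Integrable f := by
  have := integrableOn_image_iff_integrableOn_abs_det_fderiv_smul volume
    (measurableSet_singleton 0).compl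
    (fun x hx => (hasFDerivAt_retardationMap w hx).hasFDerivWithinAt)
    (bijective_retardationMap hw).injective.injOn f
  simpa only [image_compl_zero_retardationMap hw, IntegrableOn, restrict_compl_singleton,
    abs_det_fderiv_retardationMap hw] using this.symm

end ChangeOfVariables

end Retardation

section Boost

/-- The Lorentz factor `γ` of the speed `β`; only meaningful for `|β| < 1`. -/
noncomputable def lorentzFactor (β : ℝ) : ℝ := 1 / √(1 - β ^ 2)

theorem lorentzFactor_pos {β : ℝ} (hβ : |β| < 1) : 0 < lorentzFactor β :=
  one_div_pos.2 (Real.sqrt_pos.2 (sub_pos.2 ((sq_lt_one_iff_abs_lt_one β).2 hβ)))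

theorem lorentzFactor_sq_mul {β : ℝ} (hβ : |β| < 1) : lorentzFactor β ^ 2 * (1 - β ^ 2) = 1 := by
  have : 0 < 1 - β ^ 2 := sub_pos.2 ((sq_lt_one_iff_abs_lt_one β).2 hβ)
  rw [lorentzFactor, div_pow, Real.sq_sqrt this.le]
  field_simp

variable {E : Type*} [NormedAddCommGroup E] [InnerProductSpace ℝ E] {w : E}

/-- The length `|ỹ|` of the vector `ỹ` obtained from `y` by stretching its component along `w` by
the Lorentz factor. -/
noncomputable def boostedNorm (w y : E) : ℝ := √(‖y‖ ^ 2 + (lorentzFactor ‖w‖ * ⟪w, y⟫_ℝ) ^ 2)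

/-- The distance travelled by a signal of speed `1` emitted by a source of velocity `w` and received
at displacement `y` from the present position of the source. With `ỹ` as in `boostedNorm`, it is
`γ (|ỹ| + ⟪w, ỹ⟫)`. -/
noncomputable def retardedDistance (w y : E) : ℝ :=
  lorentzFactor ‖w‖ * (boostedNorm w y + lorentzFactor ‖w‖ * ⟪w, y⟫_ℝ)

/-- The fundamental solution `g_λ` of `-Δ + (λ - ∂_w)²` in dimension three, for an arbitrary
velocity vector `w` in place of `(v, 0, 0)`. Division by zero makes it `0` at the origin. -/
noncomputable def boostedYukawaKernel (w : E) (lam : ℂ) (y : E) : ℂ :=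
  lorentzFactor ‖w‖ * Complex.exp (-lam * retardedDistance w y) / (4 * π * boostedNorm w y)

theorem inner_retardationMap (w k x : E) :
    ⟪k, retardationMap w x⟫_ℝ = ⟪k, x⟫_ℝ - ‖x‖ * ⟪k, w⟫_ℝ := by
  rw [retardationMap, inner_sub_right, real_inner_smul_right]

theorem boostedNorm_retardationMap (hw : ‖w‖ < 1) (x : E) :
    boostedNorm w (retardationMap w x) = lorentzFactor ‖w‖ * (‖x‖ - ⟪w, x⟫_ℝ) := by
  have hw' : |‖w‖| < 1 := by rwa [abs_norm]
  have hinner : ⟪w, x⟫_ℝ ≤ ‖x‖ :=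
    (real_inner_le_norm w x).trans (mul_le_of_le_one_left (norm_nonneg x) hw.le)
  have hnonneg : 0 ≤ lorentzFactor ‖w‖ * (‖x‖ - ⟪w, x⟫_ℝ) :=
    mul_nonneg (lorentzFactor_pos hw').le (sub_nonneg.2 hinner)
  have hnorm : ‖retardationMap w x‖ ^ 2 =
      ‖x‖ ^ 2 - 2 * ‖x‖ * ⟪w, x⟫_ℝ + ‖x‖ ^ 2 * ‖w‖ ^ 2 := by
    rw [retardationMap, norm_sub_sq_real, real_inner_smul_right, norm_smul, norm_norm, mul_pow,
      real_inner_comm]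
    ring
  rw [boostedNorm, Real.sqrt_eq_iff_eq_sq (by positivity) hnonneg, hnorm, inner_retardationMap,
    real_inner_self_eq_norm_sq]
  linear_combination
    (2 * ‖x‖ * ⟪w, x⟫_ℝ - ‖x‖ ^ 2 * (1 + ‖w‖ ^ 2)) * lorentzFactor_sq_mul hw'

theorem retardedDistance_retardationMap (hw : ‖w‖ < 1) (x : E) :
    retardedDistance w (retardationMap w x) = ‖x‖ := by
  rw [retardedDistance, boostedNorm_retardationMap hw, inner_retardationMap,
    real_inner_self_eq_norm_sq]
  linear_combination ‖x‖ * lorentzFactor_sq_mul (β := ‖w‖) (by rwa [abs_norm])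

theorem retardationJacobian_smul_boostedYukawaKernel (hw : ‖w‖ < 1) (lam : ℂ) {x : E}
    (hx : x ≠ 0) :
    retardationJacobian w x • boostedYukawaKernel w lam (retardationMap w x) =
      yukawaKernel lam x := by
  have hγ : (lorentzFactor ‖w‖ : ℂ) ≠ 0 :=
    Complex.ofReal_ne_zero.2 (lorentzFactor_pos (by rwa [abs_norm])).ne'
  have hJ₀ : (retardationJacobian w x : ℂ) ≠ 0 :=
    Complex.ofReal_ne_zero.2 (retardationJacobian_pos hw x).ne'
  have hJ : ‖x‖ - ⟪w, x⟫_ℝ = ‖x‖ * retardationJacobian w x := by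
    rw [retardationJacobian]
    field_simp
  rw [boostedYukawaKernel, retardedDistance_retardationMap hw, boostedNorm_retardationMap hw, hJ,
    yukawaKernel, Complex.real_smul]
  push_cast
  field_simp

theorem yukawaKernel_mul_cexp_retardationMap (w k : E) (lam : ℂ) (x : E) :
    yukawaKernel lam x * Complex.exp (I * ⟪k, retardationMap w x⟫_ℝ) =
      yukawaKernel (lam + I * ⟪k, w⟫_ℝ) x * Complex.exp (I * ⟪k, x⟫_ℝ) := by
  rw [yukawaKernel, yukawaKernel, div_mul_eq_mul_div, div_mul_eq_mul_div, ← Complex.exp_add,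
    ← Complex.exp_add, inner_retardationMap]
  push_cast
  ring_nf

theorem fundamental_solution_fourier_transform_general [FiniteDimensional ℝ E] [MeasurableSpace E]
    [BorelSpace E] (hE : finrank ℝ E = 3) (hw : ‖w‖ < 1) {lam : ℂ} (hlam : 0 < lam.re) :
    Integrable (boostedYukawaKernel w lam) ∧ ∀ k : E,
      ∫ y, boostedYukawaKernel w lam y * Complex.exp (I * ⟪k, y⟫_ℝ) =
        1 / (‖k‖ ^ 2 + (lam + I * ⟪k, w⟫_ℝ) ^ 2) := by
  have : Nontrivial E := nontrivial_of_finrank_eq_succ hE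
  have hpull : ∀ᵐ x : E, retardationJacobian w x • boostedYukawaKernel w lam (retardationMap w x) =
      yukawaKernel lam x := by
    filter_upwards [volume.ae_ne (0 : E)] with x hx
    exact retardationJacobian_smul_boostedYukawaKernel hw lam hx
  refine ⟨?_, fun k => ?_⟩
  · rw [← integrable_retardationJacobian_smul_comp_iff hw, integrable_congr hpull]
    exact integrable_yukawaKernel hE hlam
  · rw [← integral_retardationJacobian_smul_comp hw,
      ← integral_yukawaKernel_mul_cexp_inner hE (by simpa using hlam)]
    refine integral_congr_ae ?_
    filter_upwards [hpull] with x hx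
    rw [← smul_mul_assoc, hx, yukawaKernel_mul_cexp_retardationMap]

theorem boostedYukawaKernel_single {v : ℝ} (hv : |v| < 1) (lam : ℂ) (y : Fin 3 → ℝ) :
    boostedYukawaKernel (EuclideanSpace.single 0 v) lam (WithLp.toLp 2 y) =
      lorentzFactor v * Complex.exp (-lorentzFactor v * lam *
        (√((lorentzFactor v * y 0) ^ 2 + y 1 ^ 2 + y 2 ^ 2) + v * (lorentzFactor v * y 0 : ℝ))) /
        (4 * π * √((lorentzFactor v * y 0) ^ 2 + y 1 ^ 2 + y 2 ^ 2) : ℝ) := by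
  set w : EuclideanSpace ℝ (Fin 3) := EuclideanSpace.single 0 v with hw
  have hγ : lorentzFactor ‖w‖ = lorentzFactor v := by
    rw [lorentzFactor, hw, PiLp.norm_single, Real.norm_eq_abs, sq_abs, lorentzFactor]
  have hinner : ⟪w, WithLp.toLp 2 y⟫_ℝ = v * y 0 := by
    simp [hw, EuclideanSpace.inner_single_left]
  have hnorm : boostedNorm w (WithLp.toLp 2 y) =
      √((lorentzFactor v * y 0) ^ 2 + y 1 ^ 2 + y 2 ^ 2) := by
    rw [boostedNorm, hγ, hinner, EuclideanSpace.real_norm_sq_eq, Fin.sum_univ_three]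
    congr 1
    linear_combination -(y 0 ^ 2) * lorentzFactor_sq_mul hv
  rw [boostedYukawaKernel, retardedDistance, hγ, hnorm, hinner]
  push_cast
  ring_nf

theorem integrable_and_fourier_comp_toLp {ι : Type*} [Fintype ι] {f Φ : EuclideanSpace ℝ ι → ℂ}
    (h : Integrable f ∧ ∀ k, ∫ y, f y * Complex.exp (I * ⟪k, y⟫_ℝ) = Φ k) :
    Integrable (fun y : ι → ℝ => f (WithLp.toLp 2 y)) ∧ ∀ k : ι → ℝ,
      ∫ y : ι → ℝ, f (WithLp.toLp 2 y) * Complex.exp (I * (∑ i, k i * y i : ℝ)) =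
        Φ (WithLp.toLp 2 k) := by
  have hmp := PiLp.volume_preserving_toLp ι
  have hemb := (MeasurableEquiv.toLp 2 (ι → ℝ)).measurableEmbedding
  refine ⟨(hmp.integrable_comp_emb hemb).2 h.1, fun k => ?_⟩
  rw [← h.2, ← hmp.integral_comp hemb]
  simp [PiLp.inner_apply, mul_comm]

end Boost

/-- For `Re λ > 0`, the fundamental solution `g(y) = γ·exp(-γλ(|ỹ| + v·ỹ₁))/(4π|ỹ|)`
is integrable on `ℝ³` and its Fourier transform is `1 / (|k|² + (λ + i k₁ v)²)`. -/
theorem fundamental_solution_fourier_transform (v : ℝ) (hv0 : 0 ≤ v) (hv1 : v < 1)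
    (lam : ℂ) (hlam : 0 < lam.re) (g : (Fin 3 → ℝ) → ℂ)
    (hg : ∀ y : Fin 3 → ℝ,
      g y = ((1 / Real.sqrt (1 - v ^ 2) : ℝ) : ℂ) *
        Complex.exp (-((1 / Real.sqrt (1 - v ^ 2) : ℝ) : ℂ) * lam *
          (((Real.sqrt (((1 / Real.sqrt (1 - v ^ 2)) * y 0) ^ 2 + (y 1) ^ 2 + (y 2) ^ 2) : ℝ) : ℂ)
            + ((v : ℝ) : ℂ) * (((1 / Real.sqrt (1 - v ^ 2)) * y 0 : ℝ) : ℂ))) /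
        ((4 * Real.pi *
          Real.sqrt (((1 / Real.sqrt (1 - v ^ 2)) * y 0) ^ 2 + (y 1) ^ 2 + (y 2) ^ 2) : ℝ) : ℂ)) :
    Integrable g ∧
    ∀ k : Fin 3 → ℝ,
      (∫ y : Fin 3 → ℝ, g y * Complex.exp (Complex.I *
          ((k 0 * y 0 + k 1 * y 1 + k 2 * y 2 : ℝ) : ℂ)))
        = 1 / ((((k 0) ^ 2 + (k 1) ^ 2 + (k 2) ^ 2 : ℝ) : ℂ)
            + (lam + Complex.I * ((k 0 : ℝ) : ℂ) * ((v : ℝ) : ℂ)) ^ 2) := by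
  have hv : |v| < 1 := by rwa [abs_of_nonneg hv0]
  obtain rfl : g = fun y => boostedYukawaKernel (EuclideanSpace.single 0 v) lam (WithLp.toLp 2 y) :=
    funext fun y => (hg y).trans (boostedYukawaKernel_single hv lam y).symm
  simpa [Fin.sum_univ_three, ← Complex.ofReal_pow, EuclideanSpace.real_norm_sq_eq, mul_assoc,
    EuclideanSpace.inner_single_right, mul_comm v] using
    integrable_and_fourier_comp_toLp (fundamental_solution_fourier_transform_general
      (w := EuclideanSpace.single (0 : Fin 3) v) (by simp) (by simpa using hv) hlam)
end

section
/- Let ρ : ℝ³ → ℝ be smooth and compactly supported, let 0 ≤ v < 1, and set γ = (1 − v²)^{−1/2}. Define u(x) = (γ/(4π))·∫_{ℝ³} ρ(y)/√(γ²(x₁−y₁)² + (x₂−y₂)² + (x₃−y₃)²) dy. Then u is twice continuously differentiable on ℝ³ and satisfies −(Δu)(x) + v²·(∂₁²u)(x) = ρ(x) for every x ∈ ℝ³. -/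
open MeasureTheory

/-- The partial derivative in the `i`-th coordinate direction of a real-valued
function on `ℝ³`. -/
noncomputable def pdR (i : Fin 3) (f : (Fin 3 → ℝ) → ℝ) : (Fin 3 → ℝ) → ℝ :=
  fun x => fderiv ℝ f x (Pi.single i 1)

/-!
Write `n` for the dimension and soften the Newtonian kernel by replacing `‖x‖ ^ 2` with
`‖x‖ ^ 2 + ε ^ 2`. The result is smooth, and its Laplacian is minus an approximate identity: it is
the rescaling by `ε` of the fixed probability density
`(1 + ‖x‖ ^ 2) ^ (-(n + 2) / 2) / |B|`, where `|B|` is the volume of the unit ball, and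
`r ^ n * (1 + r ^ 2) ^ (-n / 2) / n` is a primitive of its radial profile. Green's identity moves
the Laplacian from a test function onto the softened kernel, and as `ε → 0` the Newtonian kernel
`N` satisfies `∫ N * Δ f = -f 0`; since convolution commutes with `Δ`, the potential `N ⋆ f` solves
`-Δ (N ⋆ f) = f`.

The dilation `A : (x₀, x₁, x₂) ↦ (γ x₀, x₁, x₂)` carries `(1 - v ^ 2) ∂₀² + ∂₁² + ∂₂²` to the
Laplacian, because `1 - v ^ 2 = γ⁻²`, and its Jacobian `γ` is the factor in front of the integral.
Hence the anisotropic potential of `ρ` is the Newtonian potential of `ρ ∘ A⁻¹` composed with `A`.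
-/

open Bornology Convolution Filter InnerProductSpace Laplacian Metric Module Set Topology

lemma integrable_mul_of_hasCompactSupport_right {X : Type*} [TopologicalSpace X]
    [MeasurableSpace X] [OpensMeasurableSpace X] {μ : Measure X} [IsFiniteMeasureOnCompacts μ]
    {f g : X → ℝ} (hf : Continuous f) (hg : Continuous g) (hgc : HasCompactSupport g) :
    Integrable (fun x ↦ f x * g x) μ :=
  (hf.mul hg).integrable_of_hasCompactSupport hgc.mul_left

section DirectionalDerivative

variable {E F : Type*} [NormedAddCommGroup E] [NormedSpace ℝ E]
  [NormedAddCommGroup F] [NormedSpace ℝ F]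

lemma contDiff_fderiv_apply_const {m n : WithTop ℕ∞} {f : E → F} (hf : ContDiff ℝ n f)
    (hmn : m + 1 ≤ n) (v : E) : ContDiff ℝ m (fun x ↦ fderiv ℝ f x v) :=
  (hf.fderiv_right hmn).clm_apply contDiff_const

lemma continuous_fderiv_apply_const {f : E → F} (hf : ContDiff ℝ 1 f) (v : E) :
    Continuous (fun x ↦ fderiv ℝ f x v) :=
  (hf.continuous_fderiv one_ne_zero).clm_apply continuous_const

lemma fderiv_comp_const_sub {f : E → F} (hf : Differentiable ℝ f) (x y : E) :
    fderiv ℝ (fun z ↦ f (x - z)) y = -fderiv ℝ f (x - y) := by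
  have h := (hf (x - y)).hasFDerivAt.comp y ((hasFDerivAt_id y).const_sub x)
  rw [show fderiv ℝ (fun z ↦ f (x - z)) y = _ from h.fderiv]
  ext v
  simp

variable [MeasurableSpace E] [BorelSpace E] {μ : Measure E}

lemma fderiv_convolution_right_apply [SFinite μ] [μ.IsAddLeftInvariant]
    {F' G : Type*} [NormedAddCommGroup F'] [NormedSpace ℝ F']
    [NormedAddCommGroup G] [NormedSpace ℝ G] (L : F →L[ℝ] F' →L[ℝ] G) {f : E → F} {g : E → F'}
    (hf : LocallyIntegrable f μ) (hg : ContDiff ℝ 1 g) (hgc : HasCompactSupport g) (x v : E) :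
    fderiv ℝ (f ⋆[L, μ] g) x v = (f ⋆[L, μ] fun y ↦ fderiv ℝ g y v) x := by
  rw [(hgc.hasFDerivAt_convolution_right L hf hg x).fderiv,
    convolution_precompR_apply L hf (hgc.fderiv ℝ) (hg.continuous_fderiv one_ne_zero)]

lemma integral_mul_fderiv_eq_neg_fderiv_mul_of_hasCompactSupport [FiniteDimensional ℝ E]
    [μ.IsAddHaarMeasure] {f g : E → ℝ} (hf : ContDiff ℝ 1 f) (hg : ContDiff ℝ 1 g)
    (hgc : HasCompactSupport g) (v : E) :
    ∫ x, f x * fderiv ℝ g x v ∂μ = -∫ x, fderiv ℝ f x v * g x ∂μ :=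
  integral_mul_fderiv_eq_neg_fderiv_mul_of_integrable
    (integrable_mul_of_hasCompactSupport_right (continuous_fderiv_apply_const hf v)
      hg.continuous hgc)
    (integrable_mul_of_hasCompactSupport_right hf.continuous
      (continuous_fderiv_apply_const hg v) (hgc.fderiv_apply ℝ v))
    (integrable_mul_of_hasCompactSupport_right hf.continuous hg.continuous hgc)
    (fun x _ ↦ hf.differentiable one_ne_zero x) (fun x _ ↦ hg.differentiable one_ne_zero x)

end DirectionalDerivative

section Laplacian

variable {E F : Type*} [NormedAddCommGroup E] [InnerProductSpace ℝ E] [FiniteDimensional ℝ E]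
  [NormedAddCommGroup F] [NormedSpace ℝ F]

lemma laplacian_eq_sum_fderiv_fderiv {ι : Type*} [Fintype ι] (b : OrthonormalBasis ι ℝ E)
    {f : E → F} (hf : ContDiff ℝ 2 f) :
    Δ f = fun x ↦ ∑ i, fderiv ℝ (fun y ↦ fderiv ℝ f y (b i)) x (b i) := by
  rw [laplacian_eq_iteratedFDeriv_orthonormalBasis f b]
  funext x
  refine Finset.sum_congr rfl fun i _ ↦ ?_
  have hdiff : DifferentiableAt ℝ (fderiv ℝ f) x :=
    (hf.fderiv_right one_add_one_eq_two.le).differentiable one_ne_zero x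
  rw [iteratedFDeriv_two_apply, fderiv_clm_apply hdiff (differentiableAt_const _)]
  simp

lemma continuous_laplacian {f : E → F} (hf : ContDiff ℝ 2 f) : Continuous (Δ f) := by
  rw [laplacian_eq_iteratedFDeriv_stdOrthonormalBasis]
  exact continuous_finsetSum _ fun i _ ↦
    (ContinuousMultilinearMap.apply ℝ (fun _ : Fin 2 ↦ E) F _).continuous.comp
      (hf.continuous_iteratedFDeriv le_rfl)

lemma hasCompactSupport_laplacian {f : E → F} (hf : HasCompactSupport f) :
    HasCompactSupport (Δ f) := by
  refine (hf.iteratedFDeriv (𝕜 := ℝ) 2).mono' fun x hx ↦ subset_tsupport _ fun h ↦ hx ?_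
  simp [laplacian_eq_iteratedFDeriv_stdOrthonormalBasis, h]

lemma laplacian_comp_const_sub {f : E → F} (hf : ContDiff ℝ 2 f) (x y : E) :
    Δ (fun z ↦ f (x - z)) y = Δ f (x - y) := by
  have hf' : ContDiff ℝ 2 (fun z ↦ f (x - z)) := hf.comp (contDiff_const.sub contDiff_id)
  let b := stdOrthonormalBasis ℝ E
  rw [laplacian_eq_sum_fderiv_fderiv b hf', laplacian_eq_sum_fderiv_fderiv b hf]
  refine Finset.sum_congr rfl fun i _ ↦ ?_
  have hdf : ContDiff ℝ 1 (fun z ↦ fderiv ℝ f z (b i)) :=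
    contDiff_fderiv_apply_const hf one_add_one_eq_two.le (b i)
  simp_rw [fderiv_comp_const_sub (hf.differentiable two_ne_zero), neg_apply]
  rw [fderiv_fun_neg, neg_apply, fderiv_comp_const_sub (hdf.differentiable one_ne_zero), neg_apply,
    neg_neg]

variable [MeasurableSpace E] [BorelSpace E] {μ : Measure E}

lemma laplacian_convolution_right [SFinite μ] [μ.IsAddLeftInvariant]
    {F' G : Type*} [NormedAddCommGroup F'] [NormedSpace ℝ F']
    [NormedAddCommGroup G] [NormedSpace ℝ G] (L : F →L[ℝ] F' →L[ℝ] G) {f : E → F} {g : E → F'}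
    (hf : LocallyIntegrable f μ) (hg : ContDiff ℝ 2 g) (hgc : HasCompactSupport g) :
    Δ (f ⋆[L, μ] g) = f ⋆[L, μ] Δ g := by
  let b := stdOrthonormalBasis ℝ E
  have hdg (i) : ContDiff ℝ 1 (fun x ↦ fderiv ℝ g x (b i)) :=
    contDiff_fderiv_apply_const hg one_add_one_eq_two.le (b i)
  have hdgc (i) : HasCompactSupport (fun x ↦ fderiv ℝ g x (b i)) := hgc.fderiv_apply ℝ (b i)
  rw [laplacian_eq_sum_fderiv_fderiv b (hgc.contDiff_convolution_right L hf hg),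
    laplacian_eq_sum_fderiv_fderiv b hg]
  funext x
  simp_rw [fun y i ↦ fderiv_convolution_right_apply L hf (hg.of_le one_le_two) hgc y (b i),
    fun i ↦ fderiv_convolution_right_apply L hf (hdg i) (hdgc i) x (b i), convolution_def, map_sum]
  exact (integral_finsetSum _ fun i _ ↦ ((hdgc i).fderiv_apply ℝ (b i)).convolutionExists_right L hf
    (continuous_fderiv_apply_const (hdg i) (b i)) x).symm

lemma integral_mul_laplacian_eq_integral_laplacian_mul [μ.IsAddHaarMeasure]
    {f g : E → ℝ} (hf : ContDiff ℝ 2 f) (hg : ContDiff ℝ 2 g) (hgc : HasCompactSupport g) :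
    ∫ x, f x * Δ g x ∂μ = ∫ x, Δ f x * g x ∂μ := by
  let b := stdOrthonormalBasis ℝ E
  have hdf (i) : ContDiff ℝ 1 (fun x ↦ fderiv ℝ f x (b i)) :=
    contDiff_fderiv_apply_const hf one_add_one_eq_two.le (b i)
  have hdg (i) : ContDiff ℝ 1 (fun x ↦ fderiv ℝ g x (b i)) :=
    contDiff_fderiv_apply_const hg one_add_one_eq_two.le (b i)
  have hdgc (i) : HasCompactSupport (fun x ↦ fderiv ℝ g x (b i)) := hgc.fderiv_apply ℝ (b i)
  simp only [laplacian_eq_sum_fderiv_fderiv b hf, laplacian_eq_sum_fderiv_fderiv b hg,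
    Finset.mul_sum, Finset.sum_mul]
  rw [integral_finsetSum _ fun i _ ↦ integrable_mul_of_hasCompactSupport_right hf.continuous
      (continuous_fderiv_apply_const (hdg i) (b i)) ((hdgc i).fderiv_apply ℝ (b i)),
    integral_finsetSum _ fun i _ ↦ integrable_mul_of_hasCompactSupport_right
      (continuous_fderiv_apply_const (hdf i) (b i)) hg.continuous hgc]
  refine Finset.sum_congr rfl fun i _ ↦ ?_
  rw [integral_mul_fderiv_eq_neg_fderiv_mul_of_hasCompactSupport (hf.of_le one_le_two) (hdg i)
      (hdgc i),
    integral_mul_fderiv_eq_neg_fderiv_mul_of_hasCompactSupport (hdf i) (hg.of_le one_le_two) hgc,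
    neg_neg]

end Laplacian

section PowerOfAddNormSq

variable {E : Type*} [NormedAddCommGroup E] [InnerProductSpace ℝ E] {a : ℝ}

lemma contDiff_rpow_add_norm_sq (ha : 0 < a) (s : ℝ) {n : WithTop ℕ∞} :
    ContDiff ℝ n (fun x : E ↦ (a + ‖x‖ ^ 2) ^ s) :=
  (contDiff_const.add (contDiff_norm_sq ℝ)).rpow_const_of_ne fun x ↦ by positivity

lemma fderiv_rpow_add_norm_sq_apply (ha : 0 < a) (s : ℝ) (x v : E) :
    fderiv ℝ (fun y : E ↦ (a + ‖y‖ ^ 2) ^ s) x v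
      = 2 * s * ((a + ‖x‖ ^ 2) ^ (s - 1) * inner ℝ x v) := by
  have h := (((hasStrictFDerivAt_norm_sq x).hasFDerivAt.const_add a).rpow_const
    (p := s) (Or.inl (by positivity))).fderiv
  rw [h]
  simp only [smul_apply, coe_innerSL_apply, nsmul_eq_mul, Nat.cast_ofNat, smul_eq_mul]
  ring

lemma laplacian_rpow_add_norm_sq [FiniteDimensional ℝ E] (ha : 0 < a) (s : ℝ) (x : E) :
    Δ (fun y : E ↦ (a + ‖y‖ ^ 2) ^ s) x
      = 2 * s * (a + ‖x‖ ^ 2) ^ (s - 2)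
        * (finrank ℝ E * (a + ‖x‖ ^ 2) + 2 * (s - 1) * ‖x‖ ^ 2) := by
  let b := stdOrthonormalBasis ℝ E
  have hsecond (i) : fderiv ℝ (fun y ↦ fderiv ℝ (fun z : E ↦ (a + ‖z‖ ^ 2) ^ s) y (b i))
      x (b i) = 2 * s * (a + ‖x‖ ^ 2) ^ (s - 2)
        * ((a + ‖x‖ ^ 2) + 2 * (s - 1) * inner ℝ x (b i) ^ 2) := by
    have hpow := (contDiff_rpow_add_norm_sq (E := E) ha (s - 1) (n := 1)).differentiable
      one_ne_zero x
    have hinner : HasFDerivAt (fun y : E ↦ inner ℝ y (b i)) (innerSL ℝ (b i)) x := by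
      simpa [real_inner_comm] using (innerSL ℝ (b i)).hasFDerivAt (x := x)
    have hrpow : (a + ‖x‖ ^ 2) ^ (s - 1) = (a + ‖x‖ ^ 2) ^ (s - 2) * (a + ‖x‖ ^ 2) := by
      rw [← Real.rpow_add_one (by positivity)]
      ring_nf
    have h := (hpow.hasFDerivAt.fun_mul hinner).const_mul (2 * s)
    simp_rw [fderiv_rpow_add_norm_sq_apply ha]
    rw [h.fderiv]
    simp only [smul_add, add_apply, smul_apply, smul_eq_mul, coe_innerSL_apply,
      real_inner_self_eq_norm_sq, b.norm_eq_one, fderiv_rpow_add_norm_sq_apply ha, sub_sub,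
      one_add_one_eq_two, hrpow]
    ring
  rw [laplacian_eq_sum_fderiv_fderiv b (contDiff_rpow_add_norm_sq ha s)]
  simp_rw [hsecond]
  rw [← Finset.mul_sum, Finset.sum_add_distrib, ← Finset.mul_sum, b.sum_sq_inner_left,
    Finset.sum_const, Finset.card_univ, Fintype.card_fin, nsmul_eq_mul]

/-- The exponent `(2 - n) / 2` is the one for which the terms in `‖x‖ ^ 2` cancel. -/
lemma laplacian_rpow_two_sub_finrank_div_two [FiniteDimensional ℝ E] (ha : 0 < a) (x : E) :
    Δ (fun y : E ↦ (a + ‖y‖ ^ 2) ^ ((2 - finrank ℝ E : ℝ) / 2)) x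
      = -((finrank ℝ E - 2) * finrank ℝ E * a
        * (a + ‖x‖ ^ 2) ^ (-(finrank ℝ E + 2 : ℝ) / 2)) := by
  rw [laplacian_rpow_add_norm_sq ha]
  ring_nf

end PowerOfAddNormSq

section RadialIntegral

lemma tendsto_pow_mul_one_add_sq_rpow_atTop (n : ℕ) :
    Tendsto (fun r : ℝ ↦ r ^ n * (1 + r ^ 2) ^ (-(n : ℝ) / 2)) atTop (𝓝 1) := by
  have hbase : Tendsto (fun r : ℝ ↦ (r⁻¹ ^ 2 + 1) ^ (-(n : ℝ) / 2)) atTop (𝓝 1) := by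
    simpa using ((tendsto_inv_atTop_zero.pow 2).add_const (1 : ℝ)).rpow_const
      (p := -(n : ℝ) / 2) (by simp)
  refine hbase.congr' ?_
  filter_upwards [eventually_gt_atTop 0] with r hr
  have hpow : (r ^ 2 : ℝ) ^ (-(n : ℝ) / 2) = (r ^ n)⁻¹ := by
    rw [← Real.rpow_natCast r 2, ← Real.rpow_mul hr.le, ← Real.rpow_natCast r n,
      ← Real.rpow_neg hr.le]
    congr 1
    push_cast
    ring
  have hfactor : (1 + r ^ 2 : ℝ) = r ^ 2 * (r⁻¹ ^ 2 + 1) := by field_simp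
  rw [hfactor, Real.mul_rpow (by positivity) (by positivity), hpow, ← mul_assoc,
    mul_inv_cancel₀ (by positivity), one_mul]

lemma hasDerivAt_pow_mul_one_add_sq_rpow {n : ℕ} (hn : n ≠ 0) (r : ℝ) :
    HasDerivAt (fun r : ℝ ↦ r ^ n * (1 + r ^ 2) ^ (-(n : ℝ) / 2))
      (n * (r ^ (n - 1) * (1 + r ^ 2) ^ (-(n + 2 : ℝ) / 2))) r := by
  have hpos : 0 < 1 + r ^ 2 := by positivity
  have hsq := ((hasDerivAt_pow 2 r).const_add 1).rpow_const (p := -(n : ℝ) / 2) (Or.inl hpos.ne')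
  refine ((hasDerivAt_pow n r).mul hsq).congr_deriv ?_
  have hrpow : (1 + r ^ 2) ^ (-(n : ℝ) / 2)
      = (1 + r ^ 2) ^ (-(n + 2 : ℝ) / 2) * (1 + r ^ 2) := by
    rw [← Real.rpow_add_one hpos.ne']
    ring_nf
  rw [hrpow, show -(n : ℝ) / 2 - 1 = -(n + 2) / 2 by ring, ← pow_sub_one_mul hn r]
  push_cast
  ring

lemma integral_Ioi_pow_mul_one_add_sq_rpow {n : ℕ} (hn : n ≠ 0) :
    ∫ r in Ioi (0 : ℝ), r ^ (n - 1) * (1 + r ^ 2) ^ (-(n + 2 : ℝ) / 2) = (n : ℝ)⁻¹ := by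
  have h := integral_Ioi_of_hasDerivAt_of_nonneg'
    (fun r _ ↦ hasDerivAt_pow_mul_one_add_sq_rpow hn r)
    (fun r (hr : 0 < r) ↦ by positivity) (tendsto_pow_mul_one_add_sq_rpow_atTop n)
  rw [integral_const_mul, zero_pow hn, zero_mul, sub_zero] at h
  exact eq_inv_of_mul_eq_one_right h

lemma integral_one_add_norm_sq_rpow {E : Type*} [NormedAddCommGroup E] [NormedSpace ℝ E]
    [FiniteDimensional ℝ E] [Nontrivial E] [MeasurableSpace E] [BorelSpace E]
    (μ : Measure E) [μ.IsAddHaarMeasure] :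
    ∫ x : E, (1 + ‖x‖ ^ 2) ^ (-(finrank ℝ E + 2 : ℝ) / 2) ∂μ = μ.real (ball 0 1) := by
  have hn : finrank ℝ E ≠ 0 := finrank_pos.ne'
  rw [integral_fun_norm_addHaar μ (fun r ↦ (1 + r ^ 2) ^ (-(finrank ℝ E + 2 : ℝ) / 2))]
  simp only [smul_eq_mul, nsmul_eq_mul]
  rw [integral_Ioi_pow_mul_one_add_sq_rpow hn]
  field_simp

end RadialIntegral

lemma measureReal_ball_pos {X : Type*} [PseudoMetricSpace X] [ProperSpace X] [MeasurableSpace X]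
    (μ : Measure X) [μ.IsOpenPosMeasure] [IsFiniteMeasureOnCompacts μ] (x : X) {r : ℝ}
    (hr : 0 < r) : 0 < μ.real (ball x r) :=
  ENNReal.toReal_pos (measure_ball_pos μ x hr).ne' measure_ball_lt_top.ne

section NewtonPotential

variable {E : Type*} [NormedAddCommGroup E] [InnerProductSpace ℝ E] [FiniteDimensional ℝ E]
  [MeasurableSpace E] [BorelSpace E]

variable (E) in
/-- The normalizing constant `(n - 2) * |Sⁿ⁻¹|` of the Newtonian kernel in dimension `n`, the area
of the unit sphere being expressed as `n` times the volume of the unit ball. -/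
noncomputable def newtonConst : ℝ :=
  (finrank ℝ E - 2) * (finrank ℝ E * volume.real (ball (0 : E) 1))

/-- The Newtonian kernel `‖x‖ ^ (2 - n) / ((n - 2) * |Sⁿ⁻¹|)`, which is the fundamental solution of
`-Δ` in dimension `n ≥ 3`. Its value at the origin is the junk value `0`. -/
noncomputable def newtonKernel (x : E) : ℝ :=
  ‖x‖ ^ (2 - finrank ℝ E : ℝ) / newtonConst E

/-- The Newtonian kernel with `‖x‖` softened to `√(ε ^ 2 + ‖x‖ ^ 2)`, which is smooth for
`ε ≠ 0`. -/
noncomputable def softNewtonKernel (ε : ℝ) (x : E) : ℝ :=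
  (ε ^ 2 + ‖x‖ ^ 2) ^ ((2 - finrank ℝ E : ℝ) / 2) / newtonConst E

/-- The probability density to which `-Δ` takes the softened Newtonian kernel at `ε = 1`. -/
noncomputable def newtonMollifier (x : E) : ℝ :=
  (1 + ‖x‖ ^ 2) ^ (-(finrank ℝ E + 2 : ℝ) / 2) / volume.real (ball (0 : E) 1)

/-- The Newtonian potential of a density `f`. -/
noncomputable def newtonPotential (f : E → ℝ) : E → ℝ :=
  newtonKernel ⋆[ContinuousLinearMap.mul ℝ ℝ, volume] f

lemma newtonPotential_apply (f : E → ℝ) (x : E) :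
    newtonPotential f x = ∫ y, newtonKernel (x - y) * f y :=
  convolution_eq_swap _

lemma newtonConst_pos (hn : 2 < finrank ℝ E) : 0 < newtonConst E := by
  have hn' : (2 : ℝ) < finrank ℝ E := mod_cast hn
  have hball := measureReal_ball_pos volume (0 : E) one_pos
  exact mul_pos (by linarith) (by positivity)

lemma newtonMollifier_nonneg (x : E) : 0 ≤ newtonMollifier x := by
  unfold newtonMollifier
  positivity

lemma integral_newtonMollifier [Nontrivial E] : ∫ x : E, newtonMollifier x = 1 := by
  simp_rw [newtonMollifier]
  rw [integral_div, integral_one_add_norm_sq_rpow,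
    div_self (measureReal_ball_pos volume 0 one_pos).ne']

lemma tendsto_norm_pow_mul_newtonMollifier_cobounded :
    Tendsto (fun x : E ↦ ‖x‖ ^ finrank ℝ E * newtonMollifier x) (cobounded E) (𝓝 0) := by
  have hlim : Tendsto (fun x : E ↦ (1 + ‖x‖ ^ 2)⁻¹ / volume.real (ball (0 : E) 1))
      (cobounded E) (𝓝 0) := by
    have h := (tendsto_atTop_add_const_left atTop (1 : ℝ) (tendsto_pow_atTop two_ne_zero)).comp
      (tendsto_norm_cobounded_atTop (E := E))
    simpa using h.inv_tendsto_atTop.div_const (volume.real (ball (0 : E) 1))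
  refine squeeze_zero (fun x ↦ mul_nonneg (by positivity) (newtonMollifier_nonneg x))
    (fun x ↦ ?_) hlim
  have hpos : 0 < 1 + ‖x‖ ^ 2 := by positivity
  have hnorm : ‖x‖ ^ finrank ℝ E ≤ (1 + ‖x‖ ^ 2) ^ ((finrank ℝ E : ℝ) / 2) := by
    rw [Real.rpow_div_two_eq_sqrt _ hpos.le, Real.rpow_natCast]
    gcongr
    exact Real.le_sqrt_of_sq_le (by linarith)
  rw [newtonMollifier, ← mul_div_assoc]
  gcongr
  calc _ ≤ (1 + ‖x‖ ^ 2) ^ ((finrank ℝ E : ℝ) / 2)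
          * (1 + ‖x‖ ^ 2) ^ (-(finrank ℝ E + 2 : ℝ) / 2) := by gcongr
    _ = (1 + ‖x‖ ^ 2)⁻¹ := by
      rw [← Real.rpow_add hpos, ← Real.rpow_neg_one]
      ring_nf

lemma contDiff_softNewtonKernel {ε : ℝ} (hε : ε ≠ 0) {m : WithTop ℕ∞} :
    ContDiff ℝ m (softNewtonKernel ε : E → ℝ) :=
  (contDiff_rpow_add_norm_sq (by positivity) _).div_const _

lemma laplacian_softNewtonKernel (hn : 2 < finrank ℝ E) {c : ℝ} (hc : 0 < c) (x : E) :
    Δ (softNewtonKernel c⁻¹ : E → ℝ) x = -(c ^ finrank ℝ E * newtonMollifier (c • x)) := by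
  have hn' : (2 : ℝ) < finrank ℝ E := mod_cast hn
  have hn_sub : (finrank ℝ E : ℝ) - 2 ≠ 0 := sub_ne_zero.2 hn'.ne'
  have hball := measureReal_ball_pos volume (0 : E) one_pos
  have hsoft : (softNewtonKernel c⁻¹ : E → ℝ) = (newtonConst E)⁻¹ •
      fun y : E ↦ (c⁻¹ ^ 2 + ‖y‖ ^ 2) ^ ((2 - finrank ℝ E : ℝ) / 2) := by
    funext y
    simp [softNewtonKernel, div_eq_inv_mul]
  have hsum : c⁻¹ ^ 2 + ‖x‖ ^ 2 = c⁻¹ ^ 2 * (1 + ‖c • x‖ ^ 2) := by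
    rw [norm_smul, Real.norm_of_nonneg hc.le]
    field_simp
  have hscale : (c⁻¹ ^ 2) ^ (-(finrank ℝ E + 2 : ℝ) / 2) = c ^ finrank ℝ E * c ^ 2 := by
    rw [Real.rpow_div_two_eq_sqrt _ (by positivity), Real.sqrt_sq (by positivity),
      Real.inv_rpow hc.le, Real.rpow_neg hc.le, inv_inv, ← pow_add]
    exact_mod_cast Real.rpow_natCast c (finrank ℝ E + 2)
  rw [hsoft, laplacian_smul _ (contDiff_rpow_add_norm_sq (by positivity) _).contDiffAt,
    laplacian_rpow_two_sub_finrank_div_two (by positivity), hsum,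
    Real.mul_rpow (by positivity) (by positivity), hscale, newtonMollifier, newtonConst,
    smul_eq_mul]
  field_simp

@[fun_prop]
lemma measurable_softNewtonKernel (ε : ℝ) : Measurable (softNewtonKernel ε : E → ℝ) := by
  unfold softNewtonKernel
  fun_prop

lemma softNewtonKernel_zero : (softNewtonKernel 0 : E → ℝ) = newtonKernel := by
  funext x
  rw [softNewtonKernel, newtonKernel, zero_pow two_ne_zero, zero_add,
    Real.rpow_div_two_eq_sqrt _ (sq_nonneg _), Real.sqrt_sq (norm_nonneg x)]

lemma locallyIntegrable_newtonKernel [Nontrivial E] :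
    LocallyIntegrable (newtonKernel : E → ℝ) := by
  refine locallyIntegrable_of_norm_le_rpow (C := ‖newtonConst E‖⁻¹) (α := finrank ℝ E - 2)
    finrank_pos (by linarith) (ae_of_all _ fun x ↦ ?_) ?_
  · rw [newtonKernel, neg_sub, norm_div, div_eq_inv_mul,
      Real.norm_of_nonneg (Real.rpow_nonneg (norm_nonneg x) _)]
  · rw [← softNewtonKernel_zero]
    fun_prop

lemma norm_softNewtonKernel_le (hn : 2 < finrank ℝ E) (ε : ℝ) {x : E} (hx : x ≠ 0) :
    ‖softNewtonKernel ε x‖ ≤ newtonKernel x := by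
  have hn' : (2 : ℝ) < finrank ℝ E := mod_cast hn
  have hC := newtonConst_pos hn
  rw [← softNewtonKernel_zero, softNewtonKernel, softNewtonKernel,
    Real.norm_of_nonneg (by positivity)]
  gcongr ?_ / _
  exact Real.rpow_le_rpow_of_nonpos (by positivity) (by simp [sq_nonneg]) (by linarith)

lemma tendsto_softNewtonKernel {x : E} (hx : x ≠ 0) :
    Tendsto (fun ε ↦ softNewtonKernel ε x) (𝓝 0) (𝓝 (newtonKernel x)) := by
  rw [← softNewtonKernel_zero]
  have hbase : ContinuousAt (fun ε : ℝ ↦ ε ^ 2 + ‖x‖ ^ 2) 0 := by fun_prop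
  exact (hbase.rpow_const (Or.inl (by positivity))).div_const _

lemma tendsto_integral_softNewtonKernel_mul (hn : 2 < finrank ℝ E) {f : E → ℝ}
    (hf : Continuous f) (hfc : HasCompactSupport f) :
    Tendsto (fun ε ↦ ∫ x, softNewtonKernel ε x * f x) (𝓝 0) (𝓝 (∫ x, newtonKernel x * f x)) := by
  have : Nontrivial E := nontrivial_of_finrank_pos (R := ℝ) (by omega)
  have hne : ∀ᵐ x : E, x ≠ 0 := Measure.ae_ne volume 0
  have hint : Integrable fun x ↦ newtonKernel x * f x :=
    locallyIntegrable_newtonKernel.integrable_smul_right_of_hasCompactSupport hf hfc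
  refine tendsto_integral_filter_of_dominated_convergence _
    (.of_forall fun ε ↦ by fun_prop) (.of_forall fun ε ↦ ?_) hint.norm ?_
  · filter_upwards [hne] with x hx
    rw [norm_mul, norm_mul]
    gcongr
    exact (norm_softNewtonKernel_le hn ε hx).trans (Real.le_norm_self _)
  · filter_upwards [hne] with x hx
    exact (tendsto_softNewtonKernel hx).mul_const _

lemma integral_newtonKernel_mul_laplacian (hn : 2 < finrank ℝ E) {f : E → ℝ}
    (hf : ContDiff ℝ 2 f) (hfc : HasCompactSupport f) :
    ∫ x, newtonKernel x * Δ f x = -f 0 := by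
  have : Nontrivial E := nontrivial_of_finrank_pos (R := ℝ) (by omega)
  have hkernel : Tendsto (fun c : ℝ ↦ ∫ x, softNewtonKernel c⁻¹ x * Δ f x) atTop
      (𝓝 (∫ x, newtonKernel x * Δ f x)) :=
    (tendsto_integral_softNewtonKernel_mul hn (continuous_laplacian hf)
      (hasCompactSupport_laplacian hfc)).comp tendsto_inv_atTop_zero
  have hmollifier : Tendsto
      (fun c : ℝ ↦ -∫ x : E, (c ^ finrank ℝ E * newtonMollifier (c • x)) • f x) atTop (𝓝 (-f 0)) :=
    (tendsto_integral_comp_smul_smul_of_integrable newtonMollifier_nonneg integral_newtonMollifier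
      tendsto_norm_pow_mul_newtonMollifier_cobounded
      (hf.continuous.integrable_of_hasCompactSupport hfc) hf.continuous.continuousAt).neg
  refine tendsto_nhds_unique (hkernel.congr' ?_) hmollifier
  filter_upwards [eventually_gt_atTop 0] with c hc
  simp_rw [integral_mul_laplacian_eq_integral_laplacian_mul
      (contDiff_softNewtonKernel (inv_ne_zero hc.ne')) hf hfc,
    laplacian_softNewtonKernel hn hc, neg_mul, integral_neg, smul_eq_mul]

lemma contDiff_newtonPotential [Nontrivial E] {n : ℕ∞} {f : E → ℝ} (hf : ContDiff ℝ n f)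
    (hfc : HasCompactSupport f) : ContDiff ℝ n (newtonPotential f) :=
  hfc.contDiff_convolution_right _ locallyIntegrable_newtonKernel hf

lemma laplacian_newtonPotential (hn : 2 < finrank ℝ E) {f : E → ℝ} (hf : ContDiff ℝ 2 f)
    (hfc : HasCompactSupport f) : Δ (newtonPotential f) = -f := by
  have : Nontrivial E := nontrivial_of_finrank_pos (R := ℝ) (by omega)
  funext x
  have hfx : ContDiff ℝ 2 (fun y ↦ f (x - y)) := hf.comp (contDiff_const.sub contDiff_id)
  have hfxc : HasCompactSupport (fun y ↦ f (x - y)) := hfc.comp_homeomorph (Homeomorph.subLeft x)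
  rw [newtonPotential, laplacian_convolution_right _ locallyIntegrable_newtonKernel hf hfc]
  calc ∫ y, newtonKernel y * Δ f (x - y)
      = ∫ y, newtonKernel y * Δ (fun z ↦ f (x - z)) y := by simp_rw [laplacian_comp_const_sub hf x]
    _ = -f x := by rw [integral_newtonKernel_mul_laplacian hn hfx hfxc, sub_zero]

end NewtonPotential

section DiagonalScaling

variable {ι : Type*}

/-- The linear change of variables `x ↦ (w i * x i)ᵢ`, whose target is equipped with the Euclidean
norm. -/
noncomputable def diagScale (w : ι → ℝˣ) : (ι → ℝ) ≃L[ℝ] EuclideanSpace ℝ ι :=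
  (ContinuousLinearEquiv.piCongrRight fun i ↦ ContinuousLinearEquiv.smulLeft (w i)).trans
    (EuclideanSpace.equiv ι ℝ).symm

lemma diagScale_apply (w : ι → ℝˣ) (x : ι → ℝ) (i : ι) : diagScale w x i = w i * x i :=
  rfl

variable [Fintype ι]

lemma diagScale_single [DecidableEq ι] (w : ι → ℝˣ) (i : ι) :
    diagScale w (Pi.single i 1) = (w i : ℝ) • EuclideanSpace.basisFun ι ℝ i := by
  ext j
  obtain rfl | hji := eq_or_ne j i <;> simp [diagScale_apply, *]

lemma smul_map_diagScale_volume (w : ι → ℝˣ) :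
    ENNReal.ofReal |∏ i, (w i : ℝ)| • Measure.map (diagScale w) volume = volume := by
  classical
  have hdet : (Matrix.diagonal fun i ↦ (w i : ℝ)).det ≠ 0 := by
    simp [Matrix.det_diagonal, Finset.prod_ne_zero_iff]
  have hcomp : ⇑(diagScale w)
      = WithLp.toLp 2 ∘ Matrix.toLin' (Matrix.diagonal fun i ↦ (w i : ℝ)) := by
    ext x i
    simp [diagScale_apply, Matrix.mulVec_diagonal]
  rw [hcomp, ← Measure.map_map (PiLp.volume_preserving_toLp ι).measurable
      (LinearMap.continuous_of_finiteDimensional _).measurable, ← Measure.map_smul,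
    ← Matrix.det_diagonal, Real.smul_map_diagonal_volume_pi hdet,
    (PiLp.volume_preserving_toLp ι).map_eq]

lemma integral_eq_abs_prod_smul_integral_comp_diagScale {F : Type*} [NormedAddCommGroup F]
    [NormedSpace ℝ F] (w : ι → ℝˣ) (f : EuclideanSpace ℝ ι → F) :
    ∫ z, f z = |∏ i, (w i : ℝ)| • ∫ x, f (diagScale w x) := by
  rw [← smul_map_diagScale_volume w, integral_smul_measure, ENNReal.toReal_ofReal (abs_nonneg _)]
  exact congrArg _ ((diagScale w).toHomeomorph.measurableEmbedding.integral_map f)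

lemma fderiv_fderiv_comp_continuousLinearEquiv {V W F : Type*} [NormedAddCommGroup V]
    [NormedSpace ℝ V] [NormedAddCommGroup W] [NormedSpace ℝ W] [NormedAddCommGroup F]
    [NormedSpace ℝ F] (A : V ≃L[ℝ] W) (g : W → F) (x v w : V) :
    fderiv ℝ (fun y ↦ fderiv ℝ (g ∘ A) y v) x w
      = fderiv ℝ (fun z ↦ fderiv ℝ g z (A v)) (A x) (A w) := by
  simp_rw [A.comp_right_fderiv]
  exact DFunLike.congr_fun (A.comp_right_fderiv (f := fun z ↦ fderiv ℝ g z (A v))) w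

lemma laplacian_diagScale [DecidableEq ι] (w : ι → ℝˣ) {g : EuclideanSpace ℝ ι → ℝ}
    (hg : ContDiff ℝ 2 g) (x : ι → ℝ) :
    Δ g (diagScale w x) = ∑ i, ((w i : ℝ) ^ 2)⁻¹ *
      fderiv ℝ (fun y ↦ fderiv ℝ (g ∘ diagScale w) y (Pi.single i 1)) x (Pi.single i 1) := by
  rw [laplacian_eq_sum_fderiv_fderiv (EuclideanSpace.basisFun ι ℝ) hg]
  refine Finset.sum_congr rfl fun i _ ↦ ?_
  have hdiff : DifferentiableAt ℝ
      (fun z ↦ fderiv ℝ g z (EuclideanSpace.basisFun ι ℝ i)) (diagScale w x) :=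
    (contDiff_fderiv_apply_const hg one_add_one_eq_two.le _).differentiable one_ne_zero _
  simp_rw [fderiv_fderiv_comp_continuousLinearEquiv, diagScale_single, map_smul, smul_eq_mul]
  rw [fderiv_const_mul hdiff, smul_apply, smul_eq_mul]
  field_simp [(w i).ne_zero]

end DiagonalScaling

section DimensionThree

lemma newtonKernel_euclideanSpace_fin_three (x : EuclideanSpace ℝ (Fin 3)) :
    newtonKernel x = (4 * Real.pi)⁻¹ / ‖x‖ := by
  have hball : volume.real (ball (0 : EuclideanSpace ℝ (Fin 3)) 1) = Real.pi * 4 / 3 := by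
    rw [measureReal_def, EuclideanSpace.volume_ball_fin_three, ENNReal.ofReal_one, one_pow,
      one_mul, ENNReal.toReal_ofReal (by positivity)]
  rw [newtonKernel, newtonConst, hball, finrank_euclideanSpace_fin, Nat.cast_ofNat,
    show (2 - 3 : ℝ) = -1 by norm_num, Real.rpow_neg_one]
  ring

/-- The Lorentz dilation `(x₀, x₁, x₂) ↦ (γ x₀, x₁, x₂)` along the direction of motion. -/
noncomputable def lorentzDilation (γ : ℝˣ) : (Fin 3 → ℝ) ≃L[ℝ] EuclideanSpace ℝ (Fin 3) :=
  diagScale ![γ, 1, 1]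

lemma norm_lorentzDilation (γ : ℝˣ) (x : Fin 3 → ℝ) :
    ‖lorentzDilation γ x‖ = √((γ : ℝ) ^ 2 * x 0 ^ 2 + x 1 ^ 2 + x 2 ^ 2) := by
  rw [EuclideanSpace.norm_eq, Fin.sum_univ_three]
  simp [lorentzDilation, diagScale_apply, mul_pow]

lemma newtonPotential_lorentzDilation (γ : ℝˣ) (rho : (Fin 3 → ℝ) → ℝ) (x : Fin 3 → ℝ) :
    newtonPotential (rho ∘ (lorentzDilation γ).symm) (lorentzDilation γ x)
      = |(γ : ℝ)| / (4 * Real.pi) * ∫ y, rho y /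
        √((γ : ℝ) ^ 2 * (x 0 - y 0) ^ 2 + (x 1 - y 1) ^ 2 + (x 2 - y 2) ^ 2) := by
  have hkernel (y : Fin 3 → ℝ) :
      newtonKernel (lorentzDilation γ x - lorentzDilation γ y) * rho y
        = (4 * Real.pi)⁻¹ * (rho y /
          √((γ : ℝ) ^ 2 * (x 0 - y 0) ^ 2 + (x 1 - y 1) ^ 2 + (x 2 - y 2) ^ 2)) := by
    rw [← map_sub, newtonKernel_euclideanSpace_fin_three, norm_lorentzDilation]
    simp only [Pi.sub_apply]
    ring
  have hprod : ∏ i, ((![γ, 1, 1] : Fin 3 → ℝˣ) i : ℝ) = γ := by simp [Fin.prod_univ_three]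
  rw [newtonPotential_apply, integral_eq_abs_prod_smul_integral_comp_diagScale ![γ, 1, 1],
    ← lorentzDilation, hprod]
  simp_rw [Function.comp_apply, ContinuousLinearEquiv.symm_apply_apply, hkernel]
  rw [integral_const_mul, smul_eq_mul, div_eq_mul_inv, mul_assoc]

lemma laplacian_lorentzDilation (γ : ℝˣ) {g : EuclideanSpace ℝ (Fin 3) → ℝ} (hg : ContDiff ℝ 2 g)
    (x : Fin 3 → ℝ) :
    Δ g (lorentzDilation γ x)
      = ((γ : ℝ) ^ 2)⁻¹ * pdR 0 (pdR 0 (g ∘ lorentzDilation γ)) x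
        + pdR 1 (pdR 1 (g ∘ lorentzDilation γ)) x + pdR 2 (pdR 2 (g ∘ lorentzDilation γ)) x := by
  unfold pdR
  simp [lorentzDilation, laplacian_diagScale _ hg, Fin.sum_univ_three]

end DimensionThree

theorem anisotropic_coulomb_solves_general (rho : (Fin 3 → ℝ) → ℝ)
    (hrho : ContDiff ℝ 2 rho) (hsupp : HasCompactSupport rho)
    (v : ℝ) (hv : |v| < 1)
    (u : (Fin 3 → ℝ) → ℝ)
    (hu : ∀ x : Fin 3 → ℝ,
      u x = ((1 / Real.sqrt (1 - v ^ 2)) / (4 * Real.pi)) *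
        ∫ y : Fin 3 → ℝ, rho y /
          Real.sqrt ((1 / Real.sqrt (1 - v ^ 2)) ^ 2 * (x 0 - y 0) ^ 2
            + (x 1 - y 1) ^ 2 + (x 2 - y 2) ^ 2)) :
    ContDiff ℝ 2 u ∧
    ∀ x : Fin 3 → ℝ,
      -(pdR 0 (pdR 0 u) x + pdR 1 (pdR 1 u) x + pdR 2 (pdR 2 u) x)
        + v ^ 2 * pdR 0 (pdR 0 u) x = rho x := by
  have hgap : 0 < 1 - v ^ 2 := sub_pos.2 ((sq_lt_one_iff_abs_lt_one v).2 hv)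
  have hγ : 0 < 1 / √(1 - v ^ 2) := by positivity
  let A := lorentzDilation (Units.mk0 _ hγ.ne')
  have hf : ContDiff ℝ 2 (rho ∘ A.symm) := hrho.comp A.symm.contDiff
  have hfc : HasCompactSupport (rho ∘ A.symm) := hsupp.comp_homeomorph A.symm.toHomeomorph
  have hN : ContDiff ℝ 2 (newtonPotential (rho ∘ A.symm)) := contDiff_newtonPotential hf hfc
  obtain rfl : u = newtonPotential (rho ∘ A.symm) ∘ A := by
    funext x
    rw [hu, Function.comp_apply, newtonPotential_lorentzDilation, Units.val_mk0, abs_of_pos hγ]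
  refine ⟨hN.comp A.contDiff, fun x ↦ ?_⟩
  have hdim : 2 < finrank ℝ (EuclideanSpace ℝ (Fin 3)) := by simp
  have hsolves := congr_fun (laplacian_newtonPotential hdim hf hfc) (A x)
  rw [laplacian_lorentzDilation _ hN, Units.val_mk0, div_pow, one_pow, Real.sq_sqrt hgap.le,
    one_div, inv_inv, Pi.neg_apply, Function.comp_apply, A.symm_apply_apply] at hsolves
  linarith

/-- The anisotropic Coulomb potential
`u(x) = (γ/(4π)) ∫ ρ(y)/√(γ²(x₁-y₁)² + (x₂-y₂)² + (x₃-y₃)²) dy`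
of a smooth compactly supported density `ρ` is `C²` and solves
`(-Δ + v²∂₁²) u = ρ`. -/
theorem anisotropic_coulomb_solves (rho : (Fin 3 → ℝ) → ℝ)
    (hrho : ContDiff ℝ (⊤ : ℕ∞) rho) (hsupp : HasCompactSupport rho)
    (v : ℝ) (hv0 : 0 ≤ v) (hv1 : v < 1)
    (u : (Fin 3 → ℝ) → ℝ)
    (hu : ∀ x : Fin 3 → ℝ,
      u x = ((1 / Real.sqrt (1 - v ^ 2)) / (4 * Real.pi)) *
        ∫ y : Fin 3 → ℝ, rho y /
          Real.sqrt ((1 / Real.sqrt (1 - v ^ 2)) ^ 2 * (x 0 - y 0) ^ 2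
            + (x 1 - y 1) ^ 2 + (x 2 - y 2) ^ 2)) :
    ContDiff ℝ 2 u ∧
    ∀ x : Fin 3 → ℝ,
      -(pdR 0 (pdR 0 u) x + pdR 1 (pdR 1 u) x + pdR 2 (pdR 2 u) x)
        + v ^ 2 * pdR 0 (pdR 0 u) x = rho x :=
  anisotropic_coulomb_solves_general rho (mod_cast contDiff_infty.1 hrho 2) hsupp v
    (by rwa [abs_of_nonneg hv0]) u hu
end

section
/- Let ρ : ℝ³ → ℝ be continuous with support contained in the closed ball of radius R centered at 0, and suppose all moments of ρ up to order 4 vanish: ∫_{ℝ³} y^α ρ(y) dy = 0 for every multi-index α with |α| ≤ 4. Let 0 ≤ v < 1, γ = (1 − v²)^{−1/2}, and define u(x) = (γ/(4π))·∫_{ℝ³} ρ(y)/√(γ²(x₁−y₁)² + (x₂−y₂)² + (x₃−y₃)²) dy. Then there exists a constant C such that |u(x)| ≤ C·(1 + |x|)^{−6} for all x ∈ ℝ³. -/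
open MeasureTheory

/-!
The kernel `K` is positively homogeneous of degree `-1` and smooth away from the origin. Rescaling
`x` to the unit sphere turns the degree-`n` Taylor expansion of `K (x - y)` in `y`, whose remainder
is uniform on the sphere by compactness, into one whose remainder is `O(‖x‖ ^ (-1 - (n + 1)))`
uniformly for `y` in the support of the density. The Taylor polynomial itself is a combination of
moments of order at most `n`, so it integrates to zero. Near the origin the potential is bounded
because it is the convolution of a continuous compactly supported function with a locally
integrable one.
-/

noncomputable section

open Bornology Asymptotics Metric Set
open scoped Convolution Nat

section Taylor

variable {E F : Type*} [NormedAddCommGroup E] [NormedSpace ℝ E]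
  [NormedAddCommGroup F] [NormedSpace ℝ F] {f : E → F} {n : ℕ}

/-- The Taylor polynomial of degree `n` of `f` at `x`, as a function of the increment `y`. -/
def taylorPolynomial (f : E → F) (n : ℕ) (x y : E) : F :=
  ∑ k ∈ Finset.range (n + 1), (k ! : ℝ)⁻¹ • iteratedFDeriv ℝ k f x fun _ ↦ y

lemma norm_sub_taylorPolynomial_le [CompleteSpace F] {x y : E} {M : ℝ}
    (hf : ∀ t ∈ Icc (0 : ℝ) 1, ContDiffAt ℝ (n + 1) f (x + t • y))
    (hM : ∀ t ∈ Icc (0 : ℝ) 1, ‖iteratedFDeriv ℝ (n + 1) f (x + t • y)‖ ≤ M) :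
    ‖f (x + y) - taylorPolynomial f n x y‖ ≤ (n ! : ℝ)⁻¹ * (M * ‖y‖ ^ (n + 1)) := by
  rw [map_add_eq_sum_add_integral_iteratedFDeriv hf, taylorPolynomial, add_sub_cancel_left,
    norm_smul, Real.norm_of_nonneg (by positivity)]
  gcongr
  have integrand_le : ∀ t ∈ uIoc (0 : ℝ) 1,
      ‖(1 - t) ^ n • iteratedFDeriv ℝ (n + 1) f (x + t • y) (fun _ ↦ y)‖ ≤ M * ‖y‖ ^ (n + 1) := by
    intro t ht
    rw [uIoc_of_le zero_le_one] at ht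
    have hpow : ‖(1 - t) ^ n‖ ≤ 1 := by
      rw [norm_pow, Real.norm_of_nonneg (by linarith [ht.2])]
      exact pow_le_one₀ (by linarith [ht.2]) (by linarith [ht.1])
    have hderiv : ‖iteratedFDeriv ℝ (n + 1) f (x + t • y) (fun _ ↦ y)‖ ≤ M * ‖y‖ ^ (n + 1) := by
      simpa using (iteratedFDeriv ℝ (n + 1) f (x + t • y)).le_of_opNorm_le
        (hM t (Ioc_subset_Icc_self ht)) fun _ ↦ y
    calc ‖(1 - t) ^ n • iteratedFDeriv ℝ (n + 1) f (x + t • y) (fun _ ↦ y)‖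
        ≤ 1 * (M * ‖y‖ ^ (n + 1)) := (norm_smul_le _ _).trans (by gcongr)
      _ = M * ‖y‖ ^ (n + 1) := one_mul _
  simpa using intervalIntegral.norm_integral_le_of_norm_le_const integrand_le

lemma exists_norm_sub_taylorPolynomial_le [CompleteSpace F] [ProperSpace E] {A U : Set E}
    (hA : IsCompact A) (hU : IsOpen U) (hAU : A ⊆ U) (hf : ContDiffOn ℝ (n + 1) f U) :
    ∃ δ > 0, ∃ M, ∀ x ∈ A, ∀ y, ‖y‖ ≤ δ →
      ‖f (x + y) - taylorPolynomial f n x y‖ ≤ M * ‖y‖ ^ (n + 1) := by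
  obtain ⟨δ, hδ, hδU⟩ := hA.exists_cthickening_subset_open hU hAU
  have hfU : ∀ z ∈ U, ContDiffAt ℝ (n + 1) f z := fun z hz ↦ hf.contDiffAt (hU.mem_nhds hz)
  have hcont : ContinuousOn (iteratedFDeriv ℝ (n + 1) f) (cthickening δ A) := fun z hz ↦
    ((hfU z (hδU hz)).continuousAt_iteratedFDeriv (mod_cast le_rfl)).continuousWithinAt
  obtain ⟨M, hM⟩ := hA.cthickening.exists_bound_of_continuousOn hcont
  refine ⟨δ, hδ, (n ! : ℝ)⁻¹ * M, fun x hx y hy ↦ ?_⟩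
  have segment_mem : ∀ t ∈ Icc (0 : ℝ) 1, x + t • y ∈ cthickening δ A := fun t ht ↦ by
    refine mem_cthickening_of_dist_le _ x δ A hx ?_
    rw [dist_self_add_left, norm_smul, Real.norm_of_nonneg ht.1]
    exact (mul_le_of_le_one_left (norm_nonneg y) ht.2).trans hy
  rw [mul_assoc]
  exact norm_sub_taylorPolynomial_le (fun t ht ↦ hfU _ (hδU (segment_mem t ht)))
    fun t ht ↦ hM _ (segment_mem t ht)

end Taylor

section PosHomogeneous

variable {E : Type*} [NormedAddCommGroup E] [NormedSpace ℝ E] {K : E → ℝ} {d : ℝ}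

/-- Positive homogeneity of real degree `d`: only dilations by `t > 0` are considered. -/
def PosHomogeneous (d : ℝ) (K : E → ℝ) : Prop :=
  ∀ t > 0, ∀ x, K (t • x) = t ^ d * K x

namespace PosHomogeneous

lemma eq_norm_rpow_mul (hK : PosHomogeneous d K) {x : E} (hx : x ≠ 0) (y : E) :
    K y = ‖x‖ ^ d * K (‖x‖⁻¹ • y) := by
  rw [← hK _ (norm_pos_iff.2 hx), smul_inv_smul₀ (norm_ne_zero_iff.2 hx)]

lemma exists_abs_le_norm_rpow [ProperSpace E] (hK : PosHomogeneous d K)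
    (hcont : ContinuousOn K {0}ᶜ) : ∃ C, ∀ x ≠ 0, |K x| ≤ C * ‖x‖ ^ d := by
  obtain ⟨C, hC⟩ := (isCompact_sphere (0 : E) 1).exists_bound_of_continuousOn
    (hcont.mono fun x hx ↦ ne_of_mem_sphere hx one_ne_zero)
  refine ⟨C, fun x hx ↦ ?_⟩
  rw [hK.eq_norm_rpow_mul hx x, abs_mul, abs_of_nonneg (by positivity), mul_comm]
  gcongr
  exact hC _ (mem_sphere_zero_iff_norm.2 (norm_smul_inv_norm hx))

lemma locallyIntegrable [FiniteDimensional ℝ E] [Nontrivial E] [MeasurableSpace E] [BorelSpace E]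
    {μ : Measure E} [μ.IsAddHaarMeasure] (hK : PosHomogeneous d K)
    (hd : -(Module.finrank ℝ E : ℝ) < d) (hcont : ContinuousOn K {0}ᶜ) :
    LocallyIntegrable K μ := by
  obtain ⟨C, hC⟩ := hK.exists_abs_le_norm_rpow hcont
  refine locallyIntegrable_of_norm_le_rpow Module.finrank_pos (C := C) (α := -d) (by linarith) ?_
    (measurable_of_continuousOn_compl_singleton 0 hcont).aestronglyMeasurable
  filter_upwards [compl_mem_ae_iff.2 (measure_singleton (0 : E))] with x hx
  simpa using hC x hx

lemma exists_abs_sub_taylorPolynomial_le [ProperSpace E] {n : ℕ} (hK : PosHomogeneous d K)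
    (hsmooth : ContDiffOn ℝ (n + 1) K {0}ᶜ) :
    ∃ δ > 0, ∃ M, ∀ x ≠ 0, ∀ y, ‖y‖ ≤ δ * ‖x‖ →
      |K (x - y) - ‖x‖ ^ d * taylorPolynomial K n (‖x‖⁻¹ • x) (-‖x‖⁻¹ • y)|
        ≤ M * ‖x‖ ^ (d - (n + 1)) * ‖y‖ ^ (n + 1) := by
  obtain ⟨δ, hδ, M, hM⟩ := exists_norm_sub_taylorPolynomial_le (isCompact_sphere (0 : E) 1)
    isOpen_compl_singleton (fun x hx ↦ ne_of_mem_sphere hx one_ne_zero) hsmooth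
  refine ⟨δ, hδ, M, fun x hx y hy ↦ ?_⟩
  have hx_pos : 0 < ‖x‖ := norm_pos_iff.2 hx
  have norm_increment : ‖-‖x‖⁻¹ • y‖ = ‖y‖ / ‖x‖ := by
    rw [norm_smul, norm_neg, norm_inv, norm_norm, inv_mul_eq_div]
  have remainder_le := hM (‖x‖⁻¹ • x) (mem_sphere_zero_iff_norm.2 (norm_smul_inv_norm hx))
    (-‖x‖⁻¹ • y) (by rwa [norm_increment, div_le_iff₀ hx_pos])
  rw [norm_increment, Real.norm_eq_abs] at remainder_le
  have rescale : K (x - y) = ‖x‖ ^ d * K (‖x‖⁻¹ • x + -‖x‖⁻¹ • y) := by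
    rw [hK.eq_norm_rpow_mul hx, smul_sub, neg_smul, sub_eq_add_neg]
  rw [rescale, ← mul_sub, abs_mul, abs_of_nonneg (by positivity)]
  calc _ ≤ ‖x‖ ^ d * (M * (‖y‖ / ‖x‖) ^ (n + 1)) := by gcongr
    _ = M * ‖x‖ ^ (d - (n + 1)) * ‖y‖ ^ (n + 1) := by
      rw [Real.rpow_sub hx_pos, ← Nat.cast_add_one, Real.rpow_natCast, div_pow]
      ring

end PosHomogeneous

end PosHomogeneous

section Moments

variable {E : Type*} [NormedAddCommGroup E] [NormedSpace ℝ E] [MeasurableSpace E]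
  {μ : Measure E} {ρ : E → ℝ} {n : ℕ}

/-- All moments of order at most `n` of the density `ρ` vanish. A moment of order `k` is expressed
without coordinates, as the integral of a `k`-linear form on the diagonal against `ρ`. -/
def VanishingMoments (n : ℕ) (ρ : E → ℝ) (μ : Measure E) : Prop :=
  ∀ k ≤ n, ∀ f : E [×k]→L[ℝ] ℝ, ∫ y, f (fun _ ↦ y) * ρ y ∂μ = 0

lemma VanishingMoments.integral_taylorPolynomial_smul [OpensMeasurableSpace E]
    [IsFiniteMeasureOnCompacts μ] (hmom : VanishingMoments n ρ μ) (hρ : Continuous ρ)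
    (hcs : HasCompactSupport ρ) (K : E → ℝ) (x : E) (c : ℝ) :
    ∫ y, taylorPolynomial K n x (c • y) * ρ y ∂μ = 0 := by
  simp_rw [taylorPolynomial, Finset.sum_mul, ContinuousMultilinearMap.map_smul_univ]
  rw [integral_finsetSum]
  · refine Finset.sum_eq_zero fun k hk ↦ ?_
    simp_rw [smul_mul_assoc]
    rw [integral_smul, integral_smul,
      hmom k (Finset.mem_range_succ_iff.1 hk) (iteratedFDeriv ℝ k K x), smul_zero, smul_zero]
  · exact fun k _ ↦ Continuous.integrable_of_hasCompactSupport (by fun_prop) hcs.mul_left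

lemma VanishingMoments.convolution_eq_integral_sub_taylorPolynomial [OpensMeasurableSpace E]
    [IsFiniteMeasureOnCompacts μ] (hmom : VanishingMoments n ρ μ) (hρ : Continuous ρ)
    (hcs : HasCompactSupport ρ) {K : E → ℝ} {x : E}
    (hex : ConvolutionExistsAt ρ K x (.mul ℝ ℝ) μ) (z : E) (b c : ℝ) :
    (ρ ⋆[.mul ℝ ℝ, μ] K) x =
      ∫ y, (K (x - y) - b * taylorPolynomial K n z (c • y)) * ρ y ∂μ := by
  have kernel_int : Integrable (fun y ↦ K (x - y) * ρ y) μ := by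
    simpa [ConvolutionExistsAt, mul_comm] using hex
  have taylor_int : Integrable (fun y ↦ b * taylorPolynomial K n z (c • y) * ρ y) μ := by
    refine Continuous.integrable_of_hasCompactSupport ?_ hcs.mul_left
    unfold taylorPolynomial
    fun_prop
  simp_rw [sub_mul]
  rw [integral_sub kernel_int taylor_int]
  simp_rw [mul_assoc, integral_const_mul, hmom.integral_taylorPolynomial_smul hρ hcs K z c,
    mul_zero, sub_zero, convolution_mul, mul_comm]

lemma prod_comp_eq_prod_pow_card_fiber {κ ι M : Type*} [Fintype κ] [Fintype ι] [DecidableEq ι]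
    [CommMonoid M] (y : ι → M) (r : κ → ι) :
    ∏ i, y (r i) = ∏ j, y j ^ (Finset.univ.filter fun i ↦ r i = j).card := by
  simp_rw [← Finset.prod_const]
  exact (Finset.prod_fiberwise' _ _ _).symm

lemma vanishingMoments_of_monomials {ι : Type*} [Fintype ι] {ρ : EuclideanSpace ℝ ι → ℝ}
    {μ : Measure (EuclideanSpace ℝ ι)} [IsFiniteMeasureOnCompacts μ]
    (hρ : Continuous ρ) (hcs : HasCompactSupport ρ)
    (hmom : ∀ α : ι → ℕ, ∑ i, α i ≤ n → ∫ y, (∏ i, y i ^ α i) * ρ y ∂μ = 0) :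
    VanishingMoments n ρ μ := by
  classical
  intro k hk f
  let e (i : ι) : EuclideanSpace ℝ ι := EuclideanSpace.basisFun ι ℝ i
  have expand (y : EuclideanSpace ℝ ι) :
      f (fun _ ↦ y) = ∑ r : Fin k → ι, (∏ i, y (r i)) * f (fun i ↦ e (r i)) := by
    conv_lhs => rw [← (EuclideanSpace.basisFun ι ℝ).sum_repr y]
    rw [f.map_sum]
    simp [e, f.map_smul_univ]
  simp_rw [expand, Finset.sum_mul, mul_right_comm _ (f _)]
  rw [integral_finsetSum]
  · refine Finset.sum_eq_zero fun r _ ↦ ?_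
    simp_rw [integral_mul_const, prod_comp_eq_prod_pow_card_fiber]
    rw [hmom, zero_mul]
    simpa [← Finset.card_eq_sum_card_fiberwise (f := r) (t := Finset.univ)
      fun _ _ ↦ Finset.mem_univ _] using hk
  · exact fun r _ ↦ Continuous.integrable_of_hasCompactSupport (by fun_prop) hcs.mul_left.mul_right

end Moments

section Decay

lemma isTheta_norm_rpow_cobounded (E : Type*) [NormedAddCommGroup E] (p : ℝ) :
    (fun x : E ↦ ‖x‖ ^ p) =Θ[cobounded E] fun x ↦ (1 + ‖x‖) ^ p := by
  have one_isLittleO : (fun _ : E ↦ (1 : ℝ)) =o[cobounded E] fun x ↦ ‖x‖ :=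
    isLittleO_const_left.2 (.inr (tendsto_norm_atTop_atTop.comp tendsto_norm_cobounded_atTop))
  exact one_isLittleO.right_isTheta_add.rpow (.of_forall fun _ ↦ by positivity)
    (.of_forall fun _ ↦ by positivity)

lemma exists_norm_le_mul_one_add_norm_rpow {E F : Type*} [NormedAddCommGroup E] [ProperSpace E]
    [NormedAddCommGroup F] {f : E → F} {p : ℝ} (hf : Continuous f)
    (hdecay : f =O[cobounded E] fun x ↦ ‖x‖ ^ p) : ∃ C, ∀ x, ‖f x‖ ≤ C * (1 + ‖x‖) ^ p := by
  have one_add_pos (x : E) : 0 < 1 + ‖x‖ := by positivity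
  obtain ⟨C₁, hC₁⟩ := (hdecay.trans (isTheta_norm_rpow_cobounded E p).isBigO).bound
  obtain ⟨r, -, hr⟩ := (hasBasis_cobounded_compl_closedBall (0 : E)).eventually_iff.1 hC₁
  have hcont : Continuous fun x ↦ ‖f x‖ / (1 + ‖x‖) ^ p :=
    hf.norm.div ((continuous_const.add continuous_norm).rpow_const fun x ↦ .inl (one_add_pos x).ne')
      fun x ↦ (Real.rpow_pos_of_pos (one_add_pos x) p).ne'
  obtain ⟨C₂, hC₂⟩ := (isCompact_closedBall (0 : E) r).bddAbove_image hcont.continuousOn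
  refine ⟨max C₁ C₂, fun x ↦ ?_⟩
  by_cases hx : x ∈ closedBall 0 r
  · rw [← div_le_iff₀ (by positivity)]
    exact (hC₂ (mem_image_of_mem _ hx)).trans (le_max_right _ _)
  · calc ‖f x‖ ≤ C₁ * ‖(1 + ‖x‖) ^ p‖ := hr hx
      _ = C₁ * (1 + ‖x‖) ^ p := by rw [Real.norm_of_nonneg (by positivity)]
      _ ≤ max C₁ C₂ * (1 + ‖x‖) ^ p := by gcongr; exact le_max_left _ _

variable {E : Type*} [NormedAddCommGroup E] [NormedSpace ℝ E] [FiniteDimensional ℝ E]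
  [MeasurableSpace E] [BorelSpace E] {μ : Measure E} {K ρ : E → ℝ} {d : ℝ} {n : ℕ}

lemma PosHomogeneous.convolution_isBigO_cobounded [IsFiniteMeasureOnCompacts μ]
    (hK : PosHomogeneous d K) (hsmooth : ContDiffOn ℝ (n + 1) K {0}ᶜ) (hρ : Continuous ρ)
    (hcs : HasCompactSupport ρ) (hmom : VanishingMoments n ρ μ)
    (hex : ConvolutionExists ρ K (.mul ℝ ℝ) μ) :
    (ρ ⋆[.mul ℝ ℝ, μ] K) =O[cobounded E] fun x ↦ ‖x‖ ^ (d - (n + 1)) := by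
  obtain ⟨δ, hδ, M, hM⟩ := hK.exists_abs_sub_taylorPolynomial_le hsmooth
  obtain ⟨R, hR⟩ := hcs.isCompact.isBounded.exists_norm_le
  refine .of_bound (M * ∫ y, ‖y‖ ^ (n + 1) * |ρ y| ∂μ) ?_
  filter_upwards [(tendsto_norm_cobounded_atTop (E := E)).eventually_ge_atTop (R / δ),
    (tendsto_norm_cobounded_atTop (E := E)).eventually_gt_atTop 0] with x hRx hx
  have integrand_le (y : E) :
      ‖(K (x - y) - ‖x‖ ^ d * taylorPolynomial K n (‖x‖⁻¹ • x) (-‖x‖⁻¹ • y)) * ρ y‖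
        ≤ M * ‖x‖ ^ (d - (n + 1)) * (‖y‖ ^ (n + 1) * |ρ y|) := by
    by_cases hy : ρ y = 0
    · simp [hy]
    have hyx : ‖y‖ ≤ δ * ‖x‖ :=
      (hR y (subset_tsupport ρ hy)).trans ((div_le_iff₀' hδ).1 hRx)
    rw [norm_mul, ← mul_assoc]
    exact mul_le_mul_of_nonneg_right (hM x (norm_pos_iff.1 hx) y hyx) (abs_nonneg _)
  have bound_int : Integrable (fun y ↦ ‖y‖ ^ (n + 1) * |ρ y|) μ :=
    Continuous.integrable_of_hasCompactSupport (by fun_prop) hcs.norm.mul_left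
  calc ‖(ρ ⋆[.mul ℝ ℝ, μ] K) x‖
      ≤ ∫ y, M * ‖x‖ ^ (d - (n + 1)) * (‖y‖ ^ (n + 1) * |ρ y|) ∂μ := by
        rw [hmom.convolution_eq_integral_sub_taylorPolynomial hρ hcs (hex x)]
        exact norm_integral_le_of_norm_le (bound_int.const_mul _) (.of_forall integrand_le)
    _ = M * (∫ y, ‖y‖ ^ (n + 1) * |ρ y| ∂μ) * ‖‖x‖ ^ (d - (n + 1))‖ := by
        rw [integral_const_mul, Real.norm_of_nonneg (by positivity)]
        ring

theorem PosHomogeneous.exists_abs_convolution_le [Nontrivial E] [μ.IsAddHaarMeasure]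
    (hK : PosHomogeneous d K) (hd : -(Module.finrank ℝ E : ℝ) < d)
    (hsmooth : ContDiffOn ℝ (n + 1) K {0}ᶜ) (hρ : Continuous ρ) (hcs : HasCompactSupport ρ)
    (hmom : VanishingMoments n ρ μ) :
    ∃ C, ∀ x, |(ρ ⋆[.mul ℝ ℝ, μ] K) x| ≤ C * (1 + ‖x‖) ^ (d - (n + 1)) :=
  have hloc : LocallyIntegrable K μ := hK.locallyIntegrable hd hsmooth.continuousOn
  exists_norm_le_mul_one_add_norm_rpow (hcs.continuous_convolution_left _ hρ hloc)
    (hK.convolution_isBigO_cobounded hsmooth hρ hcs hmom (hcs.convolutionExists_left _ hρ hloc))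

end Decay

section Coulomb

variable {ι : Type*} [Fintype ι] {a : ι → ℝ}

/-- The Coulomb kernel `1 / √(∑ aᵢ xᵢ²)` of an anisotropic medium, without the physical constant
in front; it takes the junk value `0` at the origin. -/
def anisotropicCoulombKernel (a : ι → ℝ) (x : EuclideanSpace ℝ ι) : ℝ :=
  (√(∑ i, a i * x i ^ 2))⁻¹

lemma posHomogeneous_anisotropicCoulombKernel (a : ι → ℝ) :
    PosHomogeneous (-1) (anisotropicCoulombKernel a) := by
  intro t ht x
  have radicand_smul : ∑ i, a i * (t • x) i ^ 2 = t ^ 2 * ∑ i, a i * x i ^ 2 := by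
    rw [Finset.mul_sum]
    exact Finset.sum_congr rfl fun i _ ↦ by simp only [PiLp.smul_apply, smul_eq_mul]; ring
  rw [anisotropicCoulombKernel, radicand_smul, Real.sqrt_mul (by positivity),
    Real.sqrt_sq ht.le, mul_inv, Real.rpow_neg_one, anisotropicCoulombKernel]

lemma sum_mul_sq_pos (ha : ∀ i, 0 < a i) {x : EuclideanSpace ℝ ι} (hx : x ≠ 0) :
    0 < ∑ i, a i * x i ^ 2 := by
  obtain ⟨i, hi⟩ : ∃ i, x i ≠ 0 := by
    contrapose! hx
    ext i
    exact hx i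
  exact Finset.sum_pos' (fun j _ ↦ mul_nonneg (ha j).le (sq_nonneg _))
    ⟨i, Finset.mem_univ i, mul_pos (ha i) (by positivity)⟩

lemma contDiffOn_anisotropicCoulombKernel (ha : ∀ i, 0 < a i) (n : WithTop ℕ∞) :
    ContDiffOn ℝ n (anisotropicCoulombKernel a) {0}ᶜ := by
  have radicand_contDiff :
      ContDiffOn ℝ n (fun x : EuclideanSpace ℝ ι ↦ ∑ i, a i * x i ^ 2) {0}ᶜ := by
    fun_prop
  exact (radicand_contDiff.sqrt fun x hx ↦ (sum_mul_sq_pos ha hx).ne').inv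
    fun x hx ↦ (Real.sqrt_pos.2 (sum_mul_sq_pos ha hx)).ne'

theorem anisotropic_coulomb_decay_six_general (hι : 1 < Fintype.card ι) (ha : ∀ i, 0 < a i)
    {n : ℕ} {ρ : EuclideanSpace ℝ ι → ℝ} (hρ : Continuous ρ) (hcs : HasCompactSupport ρ)
    (hmom : ∀ α : ι → ℕ, ∑ i, α i ≤ n → ∫ y, (∏ i, y i ^ α i) * ρ y = 0) (c : ℝ) :
    ∃ C, ∀ x : EuclideanSpace ℝ ι,
      |c * ∫ y, ρ y / √(∑ i, a i * (x i - y i) ^ 2)| ≤ C / (1 + ‖x‖) ^ (n + 2) := by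
  have : Nonempty ι := Fintype.card_pos_iff.1 (by lia)
  have hd : -(Module.finrank ℝ (EuclideanSpace ℝ ι) : ℝ) < -1 := by
    rw [finrank_euclideanSpace]
    exact neg_lt_neg (mod_cast hι)
  obtain ⟨C, hC⟩ := (posHomogeneous_anisotropicCoulombKernel a).exists_abs_convolution_le hd
    (contDiffOn_anisotropicCoulombKernel ha _) hρ hcs (vanishingMoments_of_monomials hρ hcs hmom)
  refine ⟨|c| * C, fun x ↦ ?_⟩
  rw [abs_mul, mul_div_assoc]
  gcongr
  have exponent : (-1 - (n + 1) : ℝ) = -((n + 2 : ℕ) : ℝ) := by push_cast; ring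
  have decay := hC x
  rw [convolution_mul, exponent, Real.rpow_neg (by positivity), Real.rpow_natCast] at decay
  simpa only [anisotropicCoulombKernel, div_eq_mul_inv, PiLp.sub_apply] using decay

end Coulomb

end

/-- Decay `|u(x)| ≤ C (1+|x|)^{-6}` of the anisotropic Coulomb potential of a
compactly supported continuous density whose moments up to order `4` vanish. -/
theorem anisotropic_coulomb_decay_six (rho : EuclideanSpace ℝ (Fin 3) → ℝ)
    (hrho : Continuous rho) (R : ℝ)
    (hsupp : Function.support rho ⊆ Metric.closedBall (0 : EuclideanSpace ℝ (Fin 3)) R)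
    (hmom : ∀ α : Fin 3 → ℕ, α 0 + α 1 + α 2 ≤ 4 →
      (∫ y : EuclideanSpace ℝ (Fin 3),
        (y 0) ^ (α 0) * (y 1) ^ (α 1) * (y 2) ^ (α 2) * rho y) = 0)
    (v : ℝ) (hv0 : 0 ≤ v) (hv1 : v < 1)
    (u : EuclideanSpace ℝ (Fin 3) → ℝ)
    (hu : ∀ x : EuclideanSpace ℝ (Fin 3),
      u x = ((1 / Real.sqrt (1 - v ^ 2)) / (4 * Real.pi)) *
        ∫ y : EuclideanSpace ℝ (Fin 3), rho y /
          Real.sqrt ((1 / Real.sqrt (1 - v ^ 2)) ^ 2 * (x 0 - y 0) ^ 2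
            + (x 1 - y 1) ^ 2 + (x 2 - y 2) ^ 2)) :
    ∃ C : ℝ, ∀ x : EuclideanSpace ℝ (Fin 3), |u x| ≤ C / (1 + ‖x‖) ^ 6 := by
  have hcs : HasCompactSupport rho :=
    .of_support_subset_isCompact (isCompact_closedBall _ _) hsupp
  have hγ : 0 < 1 / √(1 - v ^ 2) := one_div_pos.2 (Real.sqrt_pos.2 (by nlinarith))
  have ha : ∀ i, 0 < ![(1 / √(1 - v ^ 2)) ^ 2, 1, 1] i := by
    simp [Fin.forall_fin_succ, -one_div, hγ]
  simpa [hu, Fin.sum_univ_three] using anisotropic_coulomb_decay_six_general (by simp) ha hrho hcs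
    (by simpa [Fin.sum_univ_three, Fin.prod_univ_three] using hmom)
    ((1 / √(1 - v ^ 2)) / (4 * Real.pi))
end

section
/- For every k = (k₁, k₂, k₃) ∈ ℝ³ and every real v with 0 ≤ v < 1, writing |k|² = k₁² + k₂² + k₃², one has |k|⁶·(1 + v²) + |k|⁴·k₁²·(1 + 3v⁴ − 8v²) + |k|²·k₁⁴·v²·(3 − v²) ≥ 0. -/
/-!
Write `s = |k|²`, `a = k₁²` and `w = v²`. After division by `s` the polynomial is a quadratic form
in `a` and the transverse part `s - a`, and in these variables its coefficients are
`2 (1 - w)²`, `3 (1 - w)²` and `1 + w`.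
-/

theorem key_polynomial_eq_mul_quadratic {R : Type*} [CommRing R] (s a w : R) :
    s ^ 3 * (1 + w) + s ^ 2 * a * (1 + 3 * w ^ 2 - 8 * w) + s * a ^ 2 * w * (3 - w)
      = s * (2 * (1 - w) ^ 2 * a ^ 2 + 3 * (1 - w) ^ 2 * a * (s - a)
          + (1 + w) * (s - a) ^ 2) := by
  ring

section LinearOrderedRing

variable {R : Type*} [CommRing R] [LinearOrder R] [IsStrictOrderedRing R]

theorem key_polynomial_nonneg_of_le {s a w : R} (ha : 0 ≤ a) (has : a ≤ s) (hw : 0 ≤ 1 + w) :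
    0 ≤ s ^ 3 * (1 + w) + s ^ 2 * a * (1 + 3 * w ^ 2 - 8 * w) + s * a ^ 2 * w * (3 - w) := by
  have hs : 0 ≤ s := ha.trans has
  have : 0 ≤ s - a := sub_nonneg.2 has
  rw [key_polynomial_eq_mul_quadratic]
  positivity

theorem key_polynomial_nonneg_general {ι : Type*} [Fintype ι] (k : ι → R) (i : ι) (v : R) :
    0 ≤ (∑ j, k j ^ 2) ^ 3 * (1 + v ^ 2)
      + (∑ j, k j ^ 2) ^ 2 * k i ^ 2 * (1 + 3 * v ^ 4 - 8 * v ^ 2)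
      + (∑ j, k j ^ 2) * k i ^ 4 * v ^ 2 * (3 - v ^ 2) := by
  have coord_sq_le : k i ^ 2 ≤ ∑ j, k j ^ 2 :=
    Finset.single_le_sum (f := fun j ↦ k j ^ 2) (fun j _ ↦ sq_nonneg (k j)) (Finset.mem_univ i)
  have one_add_sq_nonneg : 0 ≤ 1 + v ^ 2 := by positivity
  simpa only [← pow_mul] using
    key_polynomial_nonneg_of_le (sq_nonneg (k i)) coord_sq_le one_add_sq_nonneg

end LinearOrderedRing

/-- The pointwise polynomial inequality
`|k|⁶(1+v²) + |k|⁴k₁²(1+3v⁴-8v²) + |k|²k₁⁴v²(3-v²) ≥ 0` for `0 ≤ v < 1`. -/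
theorem key_polynomial_nonneg (k : Fin 3 → ℝ) (v : ℝ) (hv0 : 0 ≤ v) (hv1 : v < 1) :
    0 ≤ ((k 0) ^ 2 + (k 1) ^ 2 + (k 2) ^ 2) ^ 3 * (1 + v ^ 2)
      + ((k 0) ^ 2 + (k 1) ^ 2 + (k 2) ^ 2) ^ 2 * (k 0) ^ 2 * (1 + 3 * v ^ 4 - 8 * v ^ 2)
      + ((k 0) ^ 2 + (k 1) ^ 2 + (k 2) ^ 2) * (k 0) ^ 4 * v ^ 2 * (3 - v ^ 2) := by
  simpa only [Fin.sum_univ_three] using key_polynomial_nonneg_general k 0 v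
end
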